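/- arXiv:2404.07393 — 4 statements merged into one kernel-verified Lean document; each statement's English description precedes it below -/
import Mathlib

section
/- Let c ≥ 1 and let λ = (λ_1, …, λ_α, c^β, λ_{α+β+1}, …) be a partition of n with λ_{α+β+1} < c, and c < λ_α when α > 0, and let μ = (λ_1, …, λ_α, c+1, c^{β−2}, c−1, λ_{α+β+1}, …). If β ≥ α + 2, or β = α + 1 with α ≥ 2, or β = α with α ≥ 4, then μ covers λ in the immersion poset on partitions of n. -/
open Finset MvPolynomial

/-- A partition of `n`, represented as a weakly decreasing list of positive
integers summing to `n`. -/
def IsPartitionOf (n : ℕ) (l : List ℕ) : Prop :=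
  l.Pairwise (· ≥ ·) ∧ (∀ x ∈ l, 0 < x) ∧ l.sum = n

/-- `T : ℕ → ℕ → ℕ` is a semistandard Young tableau of shape `l`
(rows weakly increase, columns strictly increase, entries are `0` outside
of the diagram; entries are 0-indexed, so entry value `k` stands for the
letter `k+1`). -/
def IsSSYT (l : List ℕ) (T : ℕ → ℕ → ℕ) : Prop :=
  (∀ i j1 j2, j1 ≤ j2 → j2 < l.getD i 0 → T i j1 ≤ T i j2) ∧
  (∀ i1 i2 j, i1 < i2 → j < l.getD i2 0 → T i1 j < T i2 j) ∧
  (∀ i j, l.getD i 0 ≤ j → T i j = 0)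

/-- The tableau `T` of shape `l` has content `ν`: for every `k`, the number of
cells of the diagram of `l` whose entry is `k` equals the `(k+1)`-st part of `ν`. -/
def HasContent (l : List ℕ) (T : ℕ → ℕ → ℕ) (ν : List ℕ) : Prop :=
  ∀ k, Nat.card {c : ℕ × ℕ // c.2 < l.getD c.1 0 ∧ T c.1 c.2 = k} = ν.getD k 0

/-- The Kostka number `K_{l,ν}`: the number of semistandard Young tableaux of
shape `l` and content `ν`. -/
noncomputable def kostka (l ν : List ℕ) : ℕ :=
  Nat.card {T : ℕ → ℕ → ℕ // IsSSYT l T ∧ HasContent l T ν}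

/-- `f^λ`, the number of standard Young tableaux of shape `l`. -/
noncomputable def fSYT (l : List ℕ) : ℕ := kostka l (List.replicate l.sum 1)

/-- Dominance order: all partial sums of `l` are at most those of `m`. -/
def DomLE (l m : List ℕ) : Prop := ∀ k, (l.take k).sum ≤ (m.take k).sum

/-- The standard immersion order: dominance together with `f^λ ≤ f^μ`. -/
def StdLE (l m : List ℕ) : Prop := DomLE l m ∧ fSYT l ≤ fSYT m

/-- Strict standard immersion order. -/
def StdLT (l m : List ℕ) : Prop := StdLE l m ∧ l ≠ m

/-- `m` covers `l` in the standard immersion poset on partitions of `n`. -/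
def StdCovBy (n : ℕ) (l m : List ℕ) : Prop :=
  StdLT l m ∧ ∀ ν, IsPartitionOf n ν → StdLT l ν → ¬ StdLT ν m

/-- `l` is a maximal element of the standard immersion poset on partitions of `n`. -/
def StdMaximal (n : ℕ) (l : List ℕ) : Prop :=
  ∀ m, IsPartitionOf n m → m ≠ l → ¬ StdLE l m

/-- The immersion order on partitions of `n`: `l ≤_I m` iff
`K_{l,α} ≤ K_{m,α}` for every partition `α` of `n`. -/
def ImmersionLE (n : ℕ) (l m : List ℕ) : Prop :=
  ∀ ν, IsPartitionOf n ν → kostka l ν ≤ kostka m ν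

/-- Strict immersion order. -/
def ImmersionLT (n : ℕ) (l m : List ℕ) : Prop := ImmersionLE n l m ∧ l ≠ m

/-- `m` covers `l` in the immersion poset on partitions of `n`. -/
def ImmersionCovBy (n : ℕ) (l m : List ℕ) : Prop :=
  ImmersionLT n l m ∧ ∀ ν, IsPartitionOf n ν → ImmersionLT n l ν → ¬ ImmersionLT n ν m

/-- The partition `μ` obtained from `λ = pre ++ c^β ++ suf` by moving one box
from the last row of the block of rows of length `c` to the first row of that
block (the part `c - 1` is dropped when it equals zero). -/
def movedShape (c β : ℕ) (pre suf : List ℕ) : List ℕ :=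
  pre ++ (c + 1) :: (List.replicate (β - 2) c ++ ((c - 1) :: suf).filter (fun x => x ≠ 0))

/-! ### Ballot paths -/

/-- Number of ballot paths with `m` steps from height `0` to height `h`. -/
def ballot : ℕ → ℕ → ℕ
  | 0, 0 => 1
  | 0, _ + 1 => 0
  | m + 1, 0 => ballot m 1
  | m + 1, h + 1 => ballot m (h + 2) + ballot m h

theorem ballot_zero_of_lt (m : ℕ) : ∀ h, m < h → ballot m h = 0 := by
  induction m with
  | zero => intro h hh; cases h with
    | zero => omega
    | succ h => rfl
  | succ m ih => intro h hh; cases h with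
    | zero => omega
    | succ h => simp only [ballot]; rw [ih _ (by omega), ih _ (by omega)]

theorem ballot_closed (m : ℕ) : ∀ M h, m = 2 * M + h →
    ballot m h * (M.factorial * (M + h + 1).factorial) = (h + 1) * m.factorial := by
  induction m with
  | zero =>
    intro M h hm
    obtain ⟨rfl, rfl⟩ : M = 0 ∧ h = 0 := by omega
    simp [ballot]
  | succ m ih =>
    intro M h hm
    cases h with
    | zero =>
      obtain ⟨M, rfl⟩ : ∃ k, M = k + 1 := ⟨M - 1, by omega⟩
      have := ih M 1 (by omega)
      have hm' : m = 2 * M + 1 := by omega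
      simp only [ballot, Nat.factorial_succ (M), Nat.factorial_succ m, add_zero]
      have e : M + 1 + 1 = M + 1 + 1 := rfl
      calc _ = (M + 1) * (ballot m 1 * (M.factorial * (M + 1 + 1).factorial)) := by ring
        _ = _ := by rw [this]; subst hm'; ring
    | succ h =>
      simp only [ballot]
      have h1 := ih M h (by omega)
      cases M with
      | zero =>
        rw [ballot_zero_of_lt m (h + 2) (by omega)]
        have hm' : m = h := by omega
        subst hm'
        simp only [Nat.factorial_succ, zero_add, Nat.factorial_zero] at h1 ⊢
        calc _ = (m + 1 + 1) * (ballot m m * (1 * ((m + 1) * m.factorial))) := by ring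
          _ = _ := by rw [h1]
      | succ M =>
        have h2 := ih M (h + 2) (by omega)
        have e1 : M + (h + 2) + 1 = M + 1 + (h + 1) + 1 := by ring
        have e2 : M + 1 + (h + 1) + 1 = (M + 1 + h + 1) + 1 := by ring
        rw [e1] at h2
        have hm' : m = 2 * M + h + 2 := by omega
        have h3 : (M + 1 + (h + 1) + 1).factorial
          = (M + 1 + h + 1 + 1) * (M + 1 + h + 1).factorial := by
          rw [e2, Nat.factorial_succ]
        calc _ = (M + 1) * (ballot m (h + 2) * (M.factorial * (M + 1 + (h + 1) + 1).factorial))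
                + (M + 1 + h + 1 + 1) *
                  (ballot m h * ((M + 1).factorial * (M + 1 + h + 1).factorial)) := by
              rw [h3, Nat.factorial_succ M]; ring
          _ = _ := by rw [h1, h2, Nat.factorial_succ m, hm']; ring

theorem ballot_pos (m M h : ℕ) (hm : m = 2 * M + h) : 0 < ballot m h := by
  have := ballot_closed m M h hm
  rcases Nat.eq_zero_or_pos (ballot m h) with h0 | h0
  · rw [h0] at this
    have := Nat.factorial_pos m
    simp at *
    omega
  · exact h0

theorem ballot_mono (m M b : ℕ) (hm : m = 2 * M + (b + 2)) (hb : 2 * M ≤ b * (b + 3)) :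
    ballot m (b + 2) ≤ ballot m b := by
  have h1 := ballot_closed m M (b + 2) hm
  have h2 := ballot_closed m (M + 1) b (by omega)
  have e1 : M + (b + 2) + 1 = (M + 1 + b + 1) + 1 := by ring
  rw [e1, Nat.factorial_succ] at h1
  rw [Nat.factorial_succ M] at h2
  set X := M.factorial * (M + 1 + b + 1).factorial with hX
  have hXpos : 0 < X := Nat.mul_pos (Nat.factorial_pos _) (Nat.factorial_pos _)
  have h1' : ballot m (b + 2) * (M + 1 + b + 1 + 1) * X = (b + 2 + 1) * m.factorial := by
    rw [← h1, hX]; ring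
  have h2' : ballot m b * (M + 1) * X = (b + 1) * m.factorial := by
    rw [← h2, hX]; ring
  have h3 : ballot m (b + 2) * (M + 1 + b + 1 + 1) * (b + 1) = ballot m b * (M + 1) * (b + 3) := by
    apply Nat.eq_of_mul_eq_mul_right hXpos
    calc _ = (b + 1) * (ballot m (b + 2) * (M + 1 + b + 1 + 1) * X) := by ring
      _ = (b + 3) * (ballot m b * (M + 1) * X) := by rw [h1', h2']; ring
      _ = _ := by ring
  have h4 : (M + 1) * (b + 3) ≤ (M + 1 + b + 1 + 1) * (b + 1) := by nlinarith
  have h5 : 0 < (M + 1) * (b + 3) := by positivity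
  by_contra hlt
  push Not at hlt
  have : ballot m b * ((M + 1) * (b + 3)) < ballot m (b + 2) * ((M + 1 + b + 1 + 1) * (b + 1)) :=
    lt_of_lt_of_le ((Nat.mul_lt_mul_right h5).2 hlt) (Nat.mul_le_mul_left _ h4)
  nlinarith

/-- Number of non-null steps before time `N`. -/
def stepCount (e : ℕ → Bool) : ℕ → ℕ
  | 0 => 0
  | N + 1 => if e N then stepCount e N + 1 else stepCount e N

/-- Shift a family by one, with value `z` at `0`. -/
def shiftFam {γ : Type} (z : γ) (g : ℕ → γ) : ℕ → γ
  | 0 => z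
  | k + 1 => g k

open Classical in
/-- Paths with possible null steps, staying between `0` and `u`, ending at height `h` at
time `N`, constant afterwards. -/
noncomputable def pathSet (e : ℕ → Bool) (u : ℕ → ℕ) : ℕ → ℕ → Finset (ℕ → ℕ)
  | 0 => fun h => if h = 0 then {fun _ => 0} else ∅
  | N + 1 => fun h => if h ≤ u (N + 1) then
      (if e N then
        (pathSet e u N (h + 1) ∪ shiftFam ∅ (pathSet e u N) h).image
          (fun p x => if x ≤ N then p x else h)
       else pathSet e u N h) else ∅

/-- One step of a path. -/
def PStep (b : Bool) (x y : ℕ) : Prop :=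
  (b = true → (y = x + 1 ∨ x = y + 1)) ∧ (b = false → y = x)

/-- The paths counted. -/
def IsPath (e : ℕ → Bool) (u : ℕ → ℕ) (N h : ℕ) (p : ℕ → ℕ) : Prop :=
  p 0 = 0 ∧ (∀ x < N, PStep (e x) (p x) (p (x + 1))) ∧ (∀ x, x ≤ N → p x ≤ u x) ∧
    (∀ x, N ≤ x → p x = h)

theorem mem_shiftFam (g : ℕ → Finset (ℕ → ℕ)) (h : ℕ) (p : ℕ → ℕ) :
    p ∈ shiftFam ∅ g h ↔ ∃ k, h = k + 1 ∧ p ∈ g k := by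
  cases h with
  | zero => simp [shiftFam]
  | succ h => simp [shiftFam]

theorem mem_pathSet (e : ℕ → Bool) (u : ℕ → ℕ) (N : ℕ) : ∀ h p,
    p ∈ pathSet e u N h ↔ IsPath e u N h p := by
  induction N with
  | zero =>
    intro h p
    simp only [pathSet, IsPath]
    constructor
    · intro hp
      split_ifs at hp with h0
      · rw [Finset.mem_singleton] at hp
        subst hp; subst h0
        simp
      · simp at hp
    · rintro ⟨h1, -, -, h2⟩
      have : h = 0 := by rw [← h2 0 le_rfl, h1]
      subst this
      simp only [if_true, Finset.mem_singleton]
      funext x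
      exact h2 x (Nat.zero_le x)
  | succ N ih =>
    intro h p
    simp only [pathSet]
    by_cases hu : h ≤ u (N + 1)
    · rw [if_pos hu]
      cases he : e N with
      | true =>
        simp only [if_true, Finset.mem_image, Finset.mem_union, mem_shiftFam, ih]
        constructor
        · rintro ⟨q, hq, rfl⟩
          obtain ⟨k, hk, hq⟩ : ∃ k, (k = h + 1 ∨ h = k + 1) ∧ IsPath e u N k q := by
            rcases hq with hq | ⟨k, hk, hq⟩
            · exact ⟨_, Or.inl rfl, hq⟩
            · exact ⟨k, Or.inr hk, hq⟩
          obtain ⟨h1, h2, h3, h4⟩ := hq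
          refine ⟨by simpa using h1, ?_, ?_, ?_⟩
          · intro x hx
            rcases Nat.lt_succ_iff_lt_or_eq.1 hx with hx | rfl
            · have := h2 x hx
              simp only [show x ≤ N by omega, show x + 1 ≤ N by omega, if_true]
              exact this
            · have := h4 x le_rfl
              simp only [le_refl, if_true, show ¬ (x + 1 ≤ x) by omega, if_false, this]
              refine ⟨fun _ => by omega, fun hh => by simp [he] at hh⟩
          · intro x hx
            by_cases hxN : x ≤ N
            · simpa [hxN] using h3 x hxN
            · obtain rfl : x = N + 1 := by omega
              simpa [hxN] using hu
          · intro x hx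
            simp [show ¬ (x ≤ N) by omega]
        · rintro ⟨h1, h2, h3, h4⟩
          refine ⟨fun x => if x ≤ N then p x else p N, ?_, ?_⟩
          · have hs := (h2 N (Nat.lt_succ_self N)).1 he
            rw [h4 (N + 1) le_rfl] at hs
            have key : IsPath e u N (p N) (fun x => if x ≤ N then p x else p N) := by
              refine ⟨by simpa using h1, ?_, ?_, ?_⟩
              · intro x hx
                simp only [show x ≤ N by omega, show x + 1 ≤ N by omega, if_true]
                exact h2 x (by omega)
              · intro x hx
                simpa [hx] using h3 x (by omega)
              · intro x hx
                by_cases hxN : x ≤ N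
                · obtain rfl : x = N := by omega
                  simp
                · simp [hxN]
            rcases hs with hs | hs
            · exact Or.inr ⟨p N, hs, key⟩
            · left; rw [← hs]; exact key
          · funext x
            by_cases hxN : x ≤ N
            · simp [hxN]
            · simp only [hxN, if_false]
              exact (h4 x (by omega)).symm
      | false =>
        simp only [Bool.false_eq_true, if_false, ih]
        constructor
        · rintro ⟨h1, h2, h3, h4⟩
          refine ⟨h1, ?_, ?_, fun x hx => h4 x (by omega)⟩
          · intro x hx
            rcases Nat.lt_succ_iff_lt_or_eq.1 hx with hx | rfl
            · exact h2 x hx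
            · refine ⟨fun hh => by simp [he] at hh, fun _ => ?_⟩
              rw [h4 x le_rfl, h4 (x + 1) (by omega)]
          · intro x hx
            rcases Nat.le_succ_iff.1 hx with hx | rfl
            · exact h3 x hx
            · rw [h4 _ (by omega)]; exact hu
        · rintro ⟨h1, h2, h3, h4⟩
          refine ⟨h1, fun x hx => h2 x (by omega), fun x hx => h3 x (by omega), ?_⟩
          intro x hx
          rcases Nat.eq_or_lt_of_le hx with rfl | hx
          · rw [← (h2 N (Nat.lt_succ_self N)).2 he, h4 _ le_rfl]
          · exact h4 x hx
    · rw [if_neg hu]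
      constructor
      · intro h; simp at h
      · rintro ⟨h1, h2, h3, h4⟩
        have := h3 (N + 1) le_rfl
        rw [h4 _ le_rfl] at this
        exact absurd this hu

theorem card_pathSet_succ (e : ℕ → Bool) (u : ℕ → ℕ) (N h : ℕ) (hu : h ≤ u (N + 1))
    (he : e N = true) : (pathSet e u (N + 1) h).card
      = (pathSet e u N (h + 1)).card + shiftFam 0 (fun k => (pathSet e u N k).card) h := by
  classical
  simp only [pathSet, if_pos hu, he, if_true]
  rw [Finset.card_image_of_injOn, Finset.card_union_of_disjoint]
  · congr 1
    cases h <;> simp [shiftFam]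
  · rw [Finset.disjoint_left]
    intro p hp hq
    rw [mem_shiftFam] at hq
    obtain ⟨k, hk, hq⟩ := hq
    rw [mem_pathSet] at hp hq
    have h1 := hp.2.2.2 N le_rfl
    have h2 := hq.2.2.2 N le_rfl
    omega
  · have hconst : ∀ p ∈ pathSet e u N (h + 1) ∪ shiftFam ∅ (pathSet e u N) h,
        ∀ x, N ≤ x → p x = p N := by
      intro p hp x hx
      rw [Finset.mem_union, mem_shiftFam] at hp
      rcases hp with hp | ⟨k, -, hp⟩ <;> rw [mem_pathSet] at hp <;>
        rw [hp.2.2.2 x hx, hp.2.2.2 N le_rfl]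
    intro p hp q hq hpq
    have hp := hconst p hp
    have hq := hconst q hq
    have hle : ∀ x ≤ N, p x = q x := by
      intro x hx
      have := congrFun hpq x
      simpa [hx] using this
    funext x
    by_cases hx : x ≤ N
    · exact hle x hx
    · rw [hp x (by omega), hq x (by omega), hle N le_rfl]

theorem pathSet_tp (e : ℕ → Bool) (u : ℕ → ℕ) (N : ℕ) : ∀ h d,
    (pathSet e u N (h + 2 * d)).card * ballot (stepCount e N) h
      ≤ (pathSet e u N h).card * ballot (stepCount e N) (h + 2 * d) := by
  induction N with
  | zero =>
    intro h d
    cases d with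
    | zero => simp
    | succ d => simp [pathSet]
  | succ N ih =>
    intro h d
    cases d with
    | zero => simp
    | succ d =>
    by_cases hu : h + 2 * (d + 1) ≤ u (N + 1)
    · cases he : e N with
      | true =>
        rw [card_pathSet_succ e u N _ hu he, card_pathSet_succ e u N h (by omega) he]
        simp only [stepCount, he, if_true]
        cases h with
        | zero =>
          have i1 := ih 1 (d + 1)
          have i2 := ih 1 d
          simp only [shiftFam, ballot]
          have r1 : 0 + 2 * (d + 1) = 1 + 2 * d + 1 := by ring
          have r2 : 1 + 2 * (d + 1) = 1 + 2 * d + 2 := by ring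
          rw [r1]
          rw [r2] at i1
          simp only [ballot, zero_add]
          linarith
        | succ k =>
          have i1 := ih (k + 2) (d + 1)
          have i2 := ih k (d + 2)
          have i3 := ih k (d + 1)
          have i4 := ih (k + 2) d
          have r1 : k + 1 + 2 * (d + 1) = (k + 2 * d + 2) + 1 := by ring
          have r2 : k + 2 + 2 * (d + 1) = k + 2 * d + 2 + 2 := by ring
          have r3 : k + 2 * (d + 2) = k + 2 * d + 2 + 2 := by ring
          have r4 : k + 2 * (d + 1) = k + 2 * d + 2 := by ring
          have r5 : k + 2 + 2 * d = k + 2 * d + 2 := by ring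
          rw [r2] at i1
          rw [r3] at i2
          rw [r4] at i3
          rw [r5] at i4
          rw [r1]
          simp only [shiftFam, ballot]
          have r6 : k + 2 * d + 2 + 1 + 1 = k + 2 * d + 2 + 2 := by ring
          have r7 : k + 1 + 1 = k + 2 := by ring
          rw [r6, r7]
          linarith
      | false =>
        have := ih h (d + 1)
        simpa [pathSet, stepCount, he, hu, show h ≤ u (N + 1) by omega] using this
    · have : pathSet e u (N + 1) (h + 2 * (d + 1)) = ∅ := by
        simp only [pathSet, if_neg hu]
      simp [this]

theorem exists_path_injection (e : ℕ → Bool) (u : ℕ → ℕ) (N M b : ℕ)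
    (hm : stepCount e N = 2 * M + (b + 2)) (hb : 2 * M ≤ b * (b + 3)) :
    ∃ Φ : (ℕ → ℕ) → (ℕ → ℕ), (∀ p, IsPath e u N (b + 2) p → IsPath e u N b (Φ p)) ∧
      ∀ p q, IsPath e u N (b + 2) p → IsPath e u N (b + 2) q → Φ p = Φ q → p = q := by
  classical
  have h1 := pathSet_tp e u N b 1
  have h2 := ballot_mono _ M b hm hb
  have h3 := ballot_pos _ M (b + 2) hm
  have h4 : (pathSet e u N (b + 2)).card ≤ (pathSet e u N b).card := by
    by_contra hlt
    push Not at hlt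
    have := Nat.mul_le_mul_left (pathSet e u N (b + 2)).card h2
    have := (Nat.mul_lt_mul_right h3).2 hlt
    simp only [mul_one] at h1
    omega
  obtain ⟨f, hf⟩ : Nonempty ((pathSet e u N (b + 2)) ↪ (pathSet e u N b)) := by
    rw [Function.Embedding.nonempty_iff_card_le]
    simpa using h4
  refine ⟨fun p => if hp : p ∈ pathSet e u N (b + 2) then (f ⟨p, hp⟩ : ℕ → ℕ) else p, ?_, ?_⟩
  · intro p hp
    have hp' := (mem_pathSet e u N _ p).2 hp
    simp only [hp', dif_pos]
    exact (mem_pathSet e u N _ _).1 (f ⟨p, hp'⟩).2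
  · intro p q hp hq hpq
    have hp' := (mem_pathSet e u N _ p).2 hp
    have hq' := (mem_pathSet e u N _ q).2 hq
    simp only [hp', hq', dif_pos] at hpq
    have := hf (Subtype.ext hpq)
    simpa using this

/-! ### Column-counting patterns -/

/-- `h x j` counts the entries smaller than `x` in column `j` of a semistandard tableau
whose row lengths are given by `f`. -/
structure IsPat (f : ℕ → ℕ) (W N : ℕ) (w : ℕ → ℕ) (h : ℕ → ℕ → ℕ) : Prop where
  zero : ∀ j, h 0 j = 0
  anti : ∀ x j, h x (j + 1) ≤ h x j
  mono : ∀ x j, h x j ≤ h (x + 1) j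
  step : ∀ x j, h (x + 1) j ≤ h x j + 1
  term : ∀ x i j, N ≤ x → (i < h x j ↔ j < f i)
  cont : ∀ x, ∑ j ∈ Finset.range W, (h (x + 1) j - h x j) = w x

/-- The relation between a tableau and its pattern. -/
def PatRel (f : ℕ → ℕ) (T h : ℕ → ℕ → ℕ) : Prop :=
  ∀ i j x, i < h x j ↔ (j < f i ∧ T i j < x)

theorem PatRel.card {f : ℕ → ℕ} {T h : ℕ → ℕ → ℕ} (hr : PatRel f T h) {W : ℕ}
    (hW : ∀ i, f i ≤ W) (k : ℕ) :
    Nat.card {c : ℕ × ℕ // c.2 < f c.1 ∧ T c.1 c.2 = k}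
      = ∑ j ∈ Finset.range W, (h (k + 1) j - h k j) := by
  classical
  have hinj : Function.Injective (fun c : (_ : ℕ) × ℕ => ((c.2, c.1) : ℕ × ℕ)) := by
    rintro ⟨a, b⟩ ⟨a', b'⟩ hh
    simp only [Prod.mk.injEq] at hh
    obtain ⟨rfl, rfl⟩ := hh
    rfl
  rw [Nat.subtype_card (((Finset.range W).sigma
    (fun j => Finset.Ico (h k j) (h (k + 1) j))).image (fun c => ((c.2, c.1) : ℕ × ℕ)))]
  · rw [Finset.card_image_of_injective _ hinj, Finset.card_sigma]
    simp
  · rintro ⟨i, j⟩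
    have h1 := hr i j k
    have h2 := hr i j (k + 1)
    have h3 := hW i
    simp only [Finset.mem_image, Finset.mem_sigma, Finset.mem_range, Finset.mem_Ico,
      Prod.mk.injEq]
    constructor
    · rintro ⟨⟨a, b⟩, ⟨h4, h5, h6⟩, rfl, rfl⟩
      simp only at *
      have h7 := h2.1 h6
      refine ⟨h7.1, ?_⟩
      by_contra h8
      have := h1.2 ⟨h7.1, by omega⟩
      omega
    · rintro ⟨h4, h5⟩
      refine ⟨⟨j, i⟩, ⟨lt_of_lt_of_le h4 h3, ?_, h2.2 ⟨h4, by omega⟩⟩, rfl, rfl⟩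
      by_contra h8
      have := h1.1 (by simpa using h8)
      omega

theorem exists_pat {l ν : List ℕ} {T : ℕ → ℕ → ℕ} {W : ℕ}
    (hl : ∀ i j, i ≤ j → l.getD j 0 ≤ l.getD i 0)
    (hW : ∀ i, l.getD i 0 ≤ W) (hT : IsSSYT l T) (hc : HasContent l T ν) :
    ∃ h, PatRel (fun i => l.getD i 0) T h ∧
      IsPat (fun i => l.getD i 0) W ν.length (fun k => ν.getD k 0) h := by
  obtain ⟨hrow, hcol, hsupp⟩ := hT
  set f := fun i => l.getD i 0 with hf
  have hlen : ∀ j, ¬ (j < f l.length) := by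
    intro j
    simp [hf]
  let h : ℕ → ℕ → ℕ := fun x j => sInf {i | ¬ (j < f i ∧ T i j < x)}
  have hr : PatRel f T h := by
    intro i j x
    constructor
    · intro hi
      have := Nat.notMem_of_lt_sInf hi
      simpa using this
    · intro hi
      by_contra hlt
      push Not at hlt
      have hne : {i | ¬ (j < f i ∧ T i j < x)}.Nonempty := ⟨l.length, fun hh => hlen j hh.1⟩
      have hm := Nat.sInf_mem hne
      apply hm
      refine ⟨lt_of_lt_of_le hi.1 (hl _ _ hlt), ?_⟩
      rcases Nat.eq_or_lt_of_le hlt with he | he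
      · have he' : sInf {i | ¬ (j < f i ∧ T i j < x)} = i := he
        rw [he']; exact hi.2
      · exact lt_trans (hcol _ _ j he hi.1) hi.2
  refine ⟨h, hr, ?_⟩
  have hmono : ∀ x j, h x j ≤ h (x + 1) j := by
    intro x j
    apply le_of_forall_lt
    intro i hi
    rw [hr] at hi ⊢
    exact ⟨hi.1, by omega⟩
  have hcont : ∀ x, ∑ j ∈ Finset.range W, (h (x + 1) j - h x j) = ν.getD x 0 := by
    intro x
    rw [← hr.card hW x]
    exact hc x
  refine ⟨?_, ?_, hmono, ?_, ?_, hcont⟩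
  · intro j
    by_contra hne
    have := (hr 0 j 0).1 (by omega)
    omega
  · intro x j
    apply le_of_forall_lt
    intro i hi
    rw [hr] at hi ⊢
    exact ⟨by omega, lt_of_le_of_lt (hrow i j (j + 1) (by omega) hi.1) hi.2⟩
  · intro x j
    by_contra hlt
    push Not at hlt
    have h1 := (hr (h x j + 1) j (x + 1)).1 hlt
    have h2 := hcol (h x j) (h x j + 1) j (by omega) h1.1
    have h3 := (hr (h x j) j x).2
      ⟨lt_of_lt_of_le h1.1 (hl _ _ (by omega)), by omega⟩
    omega
  · intro x i j hx
    rw [hr]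
    refine ⟨fun hh => hh.1, fun hh => ⟨hh, ?_⟩⟩
    by_contra hlt
    have h1 := hcont (T i j)
    rw [List.getD_eq_default _ _ (by omega)] at h1
    rw [Finset.sum_eq_zero_iff] at h1
    have h2 := h1 j (Finset.mem_range.2 (lt_of_lt_of_le hh (hW i)))
    have h3 := (hr i j (T i j + 1)).2 ⟨hh, by omega⟩
    have h4 := (hr i j (T i j)).1 (by omega)
    omega

theorem exists_tab {l ν : List ℕ} {h : ℕ → ℕ → ℕ} {W N : ℕ}
    (hW : ∀ i, l.getD i 0 ≤ W)
    (hp : IsPat (fun i => l.getD i 0) W N (fun k => ν.getD k 0) h) :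
    ∃ T, PatRel (fun i => l.getD i 0) T h ∧ IsSSYT l T ∧ HasContent l T ν := by
  classical
  set f := fun i => l.getD i 0 with hf
  have hmono : ∀ j, Monotone (fun x => h x j) := fun j => monotone_nat_of_le_succ (hp.mono · j)
  have hanti : ∀ x, Antitone (h x) := fun x => antitone_nat_of_succ_le (hp.anti x)
  let T : ℕ → ℕ → ℕ := fun i j => if j < f i then sInf {x | i < h (x + 1) j} else 0
  have hin : ∀ i j, j < f i → i < h (N + 1) j := fun i j hj => (hp.term _ i j (by omega)).2 hj
  have hout : ∀ i j x, i < h x j → j < f i := fun i j x hi =>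
    (hp.term (max x N) i j (le_max_right _ _)).1
      (lt_of_lt_of_le hi (hmono j (le_max_left x N)))
  have hr : PatRel f T h := by
    intro i j x
    constructor
    · intro hi
      have hj := hout i j x hi
      refine ⟨hj, ?_⟩
      simp only [T, if_pos hj]
      cases x with
      | zero => rw [hp.zero] at hi; omega
      | succ x => exact Nat.lt_succ_of_le (Nat.sInf_le hi)
    · rintro ⟨hj, hi⟩
      simp only [T, if_pos hj] at hi
      have hm := Nat.sInf_mem (s := {x | i < h (x + 1) j}) ⟨N, hin i j hj⟩
      exact lt_of_lt_of_le hm (hmono j hi)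
  refine ⟨T, hr, ⟨?_, ?_, ?_⟩, ?_⟩
  · intro i j1 j2 hj hj2
    have h1 := (hr i j2 (T i j2 + 1)).2 ⟨hj2, by omega⟩
    have h2 := (hr i j1 (T i j2 + 1)).1 (lt_of_lt_of_le h1 (hanti _ hj))
    omega
  · intro i1 i2 j hi hj
    have h1 := (hr i2 j (T i2 j + 1)).2 ⟨hj, by omega⟩
    have h2 := hp.step (T i2 j) j
    exact ((hr i1 j (T i2 j)).1 (by omega)).2
  · intro i j hj
    simp only [T]
    rw [if_neg]
    exact not_lt.2 hj
  · intro k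
    rw [← hp.cont k]
    exact hr.card hW k

theorem patRel_unique_tab {l : List ℕ} {T T' h : ℕ → ℕ → ℕ} (hT : IsSSYT l T)
    (hT' : IsSSYT l T') (hr : PatRel (fun i => l.getD i 0) T h)
    (hr' : PatRel (fun i => l.getD i 0) T' h) : T = T' := by
  funext i j
  by_cases hj : j < l.getD i 0
  · have h1 := (hr' i j _).1 ((hr i j (T i j + 1)).2 ⟨hj, by omega⟩)
    have h2 := (hr i j _).1 ((hr' i j (T' i j + 1)).2 ⟨hj, by omega⟩)
    omega
  · rw [hT.2.2 i j (by omega), hT'.2.2 i j (by omega)]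

theorem patRel_unique_pat {f : ℕ → ℕ} {T h h' : ℕ → ℕ → ℕ} (hr : PatRel f T h)
    (hr' : PatRel f T h') : h = h' := by
  funext x j
  apply le_antisymm
  · apply le_of_forall_lt
    intro i hi
    rw [hr] at hi
    rwa [hr']
  · apply le_of_forall_lt
    intro i hi
    rw [hr'] at hi
    rwa [hr]

theorem entry_lt {l ν : List ℕ} {T : ℕ → ℕ → ℕ} (hc : HasContent l T ν) {W : ℕ}
    (hW : ∀ i, l.getD i 0 ≤ W) {i j : ℕ} (hj : j < l.getD i 0) : T i j < ν.length := by
  by_contra hlt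
  have h1 := hc (T i j)
  rw [List.getD_eq_default _ _ (by omega), Nat.card_eq_zero] at h1
  rcases h1 with h1 | h1
  · exact h1.elim ⟨(i, j), hj, rfl⟩
  · refine h1.not_finite (Set.Finite.to_subtype (s := {c : ℕ × ℕ | c.2 < l.getD c.1 0 ∧ T c.1 c.2 = T i j}) (Set.Finite.subset ((Set.finite_Iio l.length).prod (Set.finite_Iio W)) ?_))
    rintro ⟨a, b⟩ ⟨h2, -⟩
    simp only [Set.mem_prod, Set.mem_Iio]
    refine ⟨?_, lt_of_lt_of_le h2 (hW a)⟩
    by_contra hh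
    rw [List.getD_eq_default _ _ (by simpa using hh)] at h2
    simp at h2

theorem getD_le_sum (l : List ℕ) (i : ℕ) : l.getD i 0 ≤ l.sum := by
  by_cases hi : i < l.length
  · rw [List.getD_eq_getElem _ _ hi]
    exact List.single_le_sum (by simp) _ (List.getElem_mem hi)
  · rw [List.getD_eq_default _ _ (by omega)]
    exact Nat.zero_le _

theorem finite_tab (l ν : List ℕ) :
    Finite {T : ℕ → ℕ → ℕ // IsSSYT l T ∧ HasContent l T ν} := by
  have hW := getD_le_sum l
  let g : {T : ℕ → ℕ → ℕ // IsSSYT l T ∧ HasContent l T ν} →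
      (Fin l.length → Fin l.sum → Fin (ν.length + 1)) := fun T i j =>
    ⟨min (T.1 i j) ν.length, by omega⟩
  apply Finite.of_injective g
  rintro ⟨T, hT, hc⟩ ⟨T', hT', hc'⟩ hg
  apply Subtype.ext
  funext i j
  change T i j = T' i j
  by_cases hj : j < l.getD i 0
  · have h1 := entry_lt hc hW hj
    have h2 := entry_lt hc' hW hj
    have hi : i < l.length := by
      by_contra hh
      rw [List.getD_eq_default _ _ (by omega)] at hj
      omega
    have h3 := congrArg Fin.val (congrFun (congrFun hg ⟨i, hi⟩) ⟨j, lt_of_lt_of_le hj (hW i)⟩)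
    simp only [g] at h3
    omega
  · rw [hT.2.2 i j (by omega), hT'.2.2 i j (by omega)]

theorem kostka_pos_iff (l ν : List ℕ) :
    0 < kostka l ν ↔ ∃ T, IsSSYT l T ∧ HasContent l T ν := by
  have := finite_tab l ν
  rw [kostka, Nat.card_pos_iff]
  constructor
  · rintro ⟨⟨T, hT⟩, -⟩
    exact ⟨T, hT⟩
  · rintro ⟨T, hT⟩
    exact ⟨⟨⟨T, hT⟩⟩, this⟩

theorem getD_anti {l : List ℕ} (hl : l.Pairwise (· ≥ ·)) :
    ∀ i j, i ≤ j → l.getD j 0 ≤ l.getD i 0 := by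
  intro i j hij
  by_cases hj : j < l.length
  · rw [List.getD_eq_getElem _ _ hj, List.getD_eq_getElem _ _ (lt_of_le_of_lt hij hj)]
    rcases Nat.eq_or_lt_of_le hij with rfl | hlt
    · exact le_rfl
    · exact List.pairwise_iff_getElem.1 hl i j _ _ hlt
  · rw [List.getD_eq_default _ _ (by omega)]
    exact Nat.zero_le _

theorem kostka_self_pos {l : List ℕ} (hl : l.Pairwise (· ≥ ·)) : 0 < kostka l l := by
  rw [kostka_pos_iff]
  have ha := getD_anti hl
  refine ⟨fun i j => if j < l.getD i 0 then i else 0, ⟨?_, ?_, ?_⟩, ?_⟩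
  · intro i j1 j2 h1 h2
    simp only [h2, lt_of_le_of_lt h1 h2, if_true, le_refl]
  · intro i1 i2 j h1 h2
    simp only [h2, lt_of_lt_of_le h2 (ha i1 i2 h1.le), if_true, h1]
  · intro i j h1
    simp only [not_lt.2 h1, if_false]
  · intro k
    classical
    rw [Nat.subtype_card ((Finset.range (l.getD k 0)).image (fun j => ((k, j) : ℕ × ℕ)))]
    · rw [Finset.card_image_of_injective]
      · simp
      · intro a b hab
        simpa using hab
    · rintro ⟨i, j⟩
      simp only [Finset.mem_image, Finset.mem_range, Prod.mk.injEq]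
      constructor
      · rintro ⟨a, h1, rfl, rfl⟩
        exact ⟨h1, if_pos h1⟩
      · rintro ⟨h1, h2⟩
        rw [if_pos h1] at h2
        subst h2
        exact ⟨j, h1, rfl, rfl⟩

theorem dom_of_kostka_pos {l ν : List ℕ} (ha : ∀ i j, i ≤ j → l.getD j 0 ≤ l.getD i 0)
    (hpos : 0 < kostka l ν) (k : ℕ) :
    ∑ i ∈ Finset.range k, ν.getD i 0 ≤ ∑ i ∈ Finset.range k, l.getD i 0 := by
  classical
  obtain ⟨T, hT, hc⟩ := (kostka_pos_iff l ν).1 hpos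
  have hrow : ∀ i j, j < l.getD i 0 → i ≤ T i j := by
    intro i
    induction i with
    | zero => intro j _; exact Nat.zero_le _
    | succ i ih =>
      intro j hj
      have h1 := hT.2.1 i (i + 1) j (by omega) hj
      have h2 := ih j (lt_of_lt_of_le hj (ha i (i + 1) (by omega)))
      omega
  let D : Finset ((_ : ℕ) × ℕ) := (Finset.range k).sigma (fun i => Finset.range (l.getD i 0))
  have hD : D.card = ∑ i ∈ Finset.range k, l.getD i 0 := by
    simp [D, Finset.card_sigma]
  have hinj : Function.Injective (fun c : (_ : ℕ) × ℕ => ((c.1, c.2) : ℕ × ℕ)) := by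
    rintro ⟨a, b⟩ ⟨a', b'⟩ hh
    simp only [Prod.mk.injEq] at hh
    obtain ⟨rfl, rfl⟩ := hh
    rfl
  have hν : ∀ x ∈ Finset.range k, ν.getD x 0 = (D.filter (fun c => T c.1 c.2 = x)).card := by
    intro x hx
    rw [Finset.mem_range] at hx
    rw [← hc x, Nat.subtype_card ((D.filter (fun c => T c.1 c.2 = x)).image
      (fun c => ((c.1, c.2) : ℕ × ℕ))), Finset.card_image_of_injective _ hinj]
    rintro ⟨i, j⟩
    simp only [D, Finset.mem_image, Finset.mem_filter, Finset.mem_sigma, Finset.mem_range,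
      Prod.mk.injEq]
    constructor
    · rintro ⟨⟨a, b⟩, ⟨⟨-, h1⟩, h2⟩, rfl, rfl⟩
      exact ⟨h1, h2⟩
    · rintro ⟨h1, h2⟩
      have h3 := hrow i j h1
      exact ⟨⟨i, j⟩, ⟨⟨show i < k by omega, h1⟩, h2⟩, rfl, rfl⟩
  rw [Finset.sum_congr rfl hν, ← hD, ← Finset.card_biUnion]
  · apply Finset.card_le_card
    intro c hc
    rw [Finset.mem_biUnion] at hc
    obtain ⟨x, -, hx⟩ := hc
    exact (Finset.mem_filter.1 hx).1
  · intro x _ y _ hxy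
    rw [Function.onFun, Finset.disjoint_left]
    intro c h1 h2
    exact hxy ((Finset.mem_filter.1 h1).2.symm.trans (Finset.mem_filter.1 h2).2)

/-! ### Transferring patterns between the two shapes -/

/-- Sum of columns `d` and `d+1`. -/
def colSum (d : ℕ) (h : ℕ → ℕ → ℕ) (x : ℕ) : ℕ := h x d + h x (d + 1)

/-- Difference of columns `d` and `d+1`. -/
def colDiff (d : ℕ) (h : ℕ → ℕ → ℕ) (x : ℕ) : ℕ := h x d - h x (d + 1)

/-- Which steps are non-null. -/
def colStep (d : ℕ) (h : ℕ → ℕ → ℕ) (x : ℕ) : Bool :=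
  decide (colSum d h (x + 1) = colSum d h x + 1)

/-- Upper bound on the difference, imposed by the neighbouring columns. -/
def colBound (d : ℕ) (h : ℕ → ℕ → ℕ) (x : ℕ) : ℕ :=
  if d = 0 then colSum d h x - 2 * h x (d + 2)
  else min (2 * h x (d - 1) - colSum d h x) (colSum d h x - 2 * h x (d + 2))

/-- Replace columns `d` and `d+1` keeping their sum. -/
def colReplace (d : ℕ) (h : ℕ → ℕ → ℕ) (p : ℕ → ℕ) (x j : ℕ) : ℕ :=
  if j = d then (colSum d h x + p x) / 2
  else if j = d + 1 then (colSum d h x - p x) / 2 else h x j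

theorem pstep_col (d : ℕ) (h : ℕ → ℕ → ℕ) (x a b : ℕ) : PStep (colStep d h x) a b ↔
    ((h (x + 1) d + h (x + 1) (d + 1) = h x d + h x (d + 1) + 1 → (b = a + 1 ∨ a = b + 1)) ∧
    (¬ (h (x + 1) d + h (x + 1) (d + 1) = h x d + h x (d + 1) + 1) → b = a)) := by
  by_cases he : h (x + 1) d + h (x + 1) (d + 1) = h x d + h x (d + 1) + 1
  · have : colStep d h x = true := decide_eq_true he
    simp [PStep, this, he]
  · have : colStep d h x = false := decide_eq_false he
    simp [PStep, this, he]

theorem isPath_colDiff {f : ℕ → ℕ} {W N : ℕ} {w : ℕ → ℕ} {h : ℕ → ℕ → ℕ}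
    (hp : IsPat f W N w h) {d α b : ℕ} (hf1 : ∀ i, d < f i ↔ i < α + b + 2)
    (hf2 : ∀ i, d + 1 < f i ↔ i < α) :
    IsPath (colStep d h) (colBound d h) N (b + 2) (colDiff d h) := by
  refine ⟨by simp [colDiff, hp.zero], ?_, ?_, ?_⟩
  · intro x _
    have h1 := hp.anti x d
    have h2 := hp.anti (x + 1) d
    have h3 := hp.mono x d
    have h4 := hp.mono x (d + 1)
    have h5 := hp.step x d
    have h6 := hp.step x (d + 1)
    rw [pstep_col]
    simp only [colDiff]
    constructor <;> intro <;> omega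
  · intro x _
    have h1 := hp.anti x d
    have h2 : h x (d + 2) ≤ h x (d + 1) := hp.anti x (d + 1)
    simp only [colBound, colDiff, colSum]
    split_ifs with hd
    · omega
    · have h3 := hp.anti x (d - 1)
      rw [show d - 1 + 1 = d by omega] at h3
      omega
  · intro x hx
    have h1 : h x d = α + b + 2 := eq_of_forall_lt_iff fun i => by rw [hp.term x i d hx, hf1]
    have h2 : h x (d + 1) = α :=
      eq_of_forall_lt_iff fun i => by rw [hp.term x i (d + 1) hx, hf2]
    simp only [colDiff]
    omega

theorem stepCount_col {f : ℕ → ℕ} {W N : ℕ} {w : ℕ → ℕ} {h : ℕ → ℕ → ℕ}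
    (hp : IsPat f W N w h) (d x : ℕ) :
    ∃ k ≤ h x (d + 1), colSum d h x = stepCount (colStep d h) x + 2 * k := by
  induction x with
  | zero => exact ⟨0, Nat.zero_le _, by simp [colSum, hp.zero, stepCount]⟩
  | succ x ih =>
    obtain ⟨k, hk, hs⟩ := ih
    have h3 := hp.mono x d
    have h4 := hp.mono x (d + 1)
    have h5 := hp.step x d
    have h6 := hp.step x (d + 1)
    by_cases he : colSum d h (x + 1) = colSum d h x + 1
    · have hc : colStep d h x = true := decide_eq_true he
      simp only [stepCount, hc, if_true]
      exact ⟨k, by omega, by omega⟩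
    · have hc : colStep d h x = false := decide_eq_false he
      simp only [stepCount, hc, Bool.false_eq_true, if_false]
      by_cases h7 : h (x + 1) (d + 1) = h x (d + 1)
      · refine ⟨k, by omega, ?_⟩
        rw [← hs]
        simp only [colSum] at he ⊢
        omega
      · refine ⟨k + 1, by omega, ?_⟩
        rw [mul_add, ← add_assoc, ← hs]
        simp only [colSum] at he ⊢
        omega

/-- Basic facts about a replacement path. -/
theorem path_facts {f : ℕ → ℕ} {W N : ℕ} {w : ℕ → ℕ} {h : ℕ → ℕ → ℕ}
    (hp : IsPat f W N w h) {d b : ℕ} {p : ℕ → ℕ}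
    (hpath : IsPath (colStep d h) (colBound d h) N b p) :
    (∀ x, p x ≤ colBound d h x) ∧ (∀ x, PStep (colStep d h x) (p x) (p (x + 1))) ∧
    ∀ x, ∃ a c, colReplace d h p x d = a ∧ colReplace d h p x (d + 1) = c ∧
      a + c = h x d + h x (d + 1) ∧ a = c + p x := by
  obtain ⟨p1, p2, p3, p4⟩ := hpath
  have hconst : ∀ x, N ≤ x → ∀ j, h x j = h N j := by
    intro x hx j
    exact eq_of_forall_lt_iff fun i => by rw [hp.term x i j hx, hp.term N i j le_rfl]
  have hb : ∀ x, p x ≤ colBound d h x := by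
    intro x
    by_cases hx : x ≤ N
    · exact p3 x hx
    · have h1 : colBound d h x = colBound d h N := by
        simp only [colBound, colSum, hconst x (by omega)]
      rw [h1, p4 x (by omega), ← p4 N le_rfl]
      exact p3 N le_rfl
  have hst : ∀ x, PStep (colStep d h x) (p x) (p (x + 1)) := by
    intro x
    by_cases hx : x < N
    · exact p2 x hx
    · have h1 : colStep d h x = false := by
        simp only [colStep, colSum, hconst x (by omega), hconst (x + 1) (by omega)]
        simp
      rw [h1, p4 x (by omega), p4 (x + 1) (by omega)]
      exact ⟨fun hh => by simp at hh, fun _ => rfl⟩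
  refine ⟨hb, hst, ?_⟩
  have hpar : ∀ x, (colSum d h x + p x) % 2 = 0 := by
    intro x
    induction x with
    | zero => simp [colSum, hp.zero, p1]
    | succ x ih =>
      have hs := hst x
      have h3 := hp.mono x d
      have h4 := hp.mono x (d + 1)
      have h5 := hp.step x d
      have h6 := hp.step x (d + 1)
      rw [pstep_col] at hs
      simp only [colSum] at ih ⊢
      by_cases he : h (x + 1) d + h (x + 1) (d + 1) = h x d + h x (d + 1) + 1
      · have := hs.1 he
        omega
      · have := hs.2 he
        omega
  intro x
  refine ⟨_, _, rfl, rfl, ?_⟩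
  have h1 := hpar x
  have h2 : p x ≤ colSum d h x := by
    refine le_trans (hb x) ?_
    simp only [colBound]
    split_ifs <;> omega
  simp only [colReplace, if_true, show d + 1 ≠ d by omega, if_false]
  simp only [colSum] at *
  omega

theorem isPat_colReplace {f g : ℕ → ℕ} {W N : ℕ} {w : ℕ → ℕ} {h : ℕ → ℕ → ℕ}
    (hp : IsPat f W N w h) {d α b : ℕ} (hf1 : ∀ i, d < f i ↔ i < α + b + 2)
    (hf2 : ∀ i, d + 1 < f i ↔ i < α)
    (hg1 : ∀ i, d < g i ↔ i < α + b + 1) (hg2 : ∀ i, d + 1 < g i ↔ i < α + 1)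
    (hfg : ∀ i j, j ≠ d → j ≠ d + 1 → (j < g i ↔ j < f i)) (hW : d + 1 < W)
    {p : ℕ → ℕ} (hpath : IsPath (colStep d h) (colBound d h) N b p) :
    IsPat g W N w (colReplace d h p) := by
  obtain ⟨hb, hst, hrep⟩ := path_facts hp hpath
  have hoth : ∀ x j, j ≠ d → j ≠ d + 1 → colReplace d h p x j = h x j := by
    intro x j h1 h2
    simp [colReplace, h1, h2]
  have hstep : ∀ x, colReplace d h p x d ≤ colReplace d h p (x + 1) d ∧
      colReplace d h p (x + 1) d ≤ colReplace d h p x d + 1 ∧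
      colReplace d h p x (d + 1) ≤ colReplace d h p (x + 1) (d + 1) ∧
      colReplace d h p (x + 1) (d + 1) ≤ colReplace d h p x (d + 1) + 1 := by
    intro x
    obtain ⟨a, c, ha, hc, h1, h2⟩ := hrep x
    obtain ⟨a', c', ha', hc', h1', h2'⟩ := hrep (x + 1)
    rw [ha, hc, ha', hc']
    have hs := hst x
    have h3 := hp.mono x d
    have h4 := hp.mono x (d + 1)
    have h5 := hp.step x d
    have h6 := hp.step x (d + 1)
    rw [pstep_col] at hs
    by_cases he : h (x + 1) d + h (x + 1) (d + 1) = h x d + h x (d + 1) + 1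
    · have := hs.1 he
      omega
    · have := hs.2 he
      omega
  have hmono : ∀ x j, colReplace d h p x j ≤ colReplace d h p (x + 1) j := by
    intro x j
    by_cases h1 : j = d
    · subst h1; exact (hstep x).1
    · by_cases h2 : j = d + 1
      · subst h2; exact (hstep x).2.2.1
      · rw [hoth x j h1 h2, hoth (x + 1) j h1 h2]; exact hp.mono x j
  refine ⟨?_, ?_, hmono, ?_, ?_, ?_⟩
  · intro j
    by_cases h1 : j = d
    · subst h1
      obtain ⟨a, c, ha, hc, h1, h2⟩ := hrep 0
      rw [hp.zero, hp.zero] at h1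
      omega
    · by_cases h2 : j = d + 1
      · subst h2
        obtain ⟨a, c, ha, hc, h1, h2⟩ := hrep 0
        rw [hp.zero, hp.zero] at h1
        omega
      · rw [hoth 0 j h1 h2, hp.zero]
  · intro x j
    obtain ⟨a, c, ha, hc, h1, h2⟩ := hrep x
    have hbx := hb x
    simp only [colBound, colSum] at hbx
    have q1 := hp.anti x d
    have q2 : h x (d + 2) ≤ h x (d + 1) := hp.anti x (d + 1)
    by_cases j1 : j = d
    · subst j1
      rw [ha, hc]; omega
    · by_cases j2 : j = d + 1
      · subst j2
        rw [hc, hoth x (d + 1 + 1) (by omega) (by omega)]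
        change h x (d + 2) ≤ c
        split_ifs at hbx <;> omega
      · rw [hoth x j j1 j2]
        by_cases j3 : j + 1 = d
        · have h3 := hp.anti x j
          rw [if_neg (by omega), show d - 1 = j by omega] at hbx
          rw [j3] at h3 ⊢
          rw [ha]
          omega
        · rw [hoth x (j + 1) j3 (by omega)]
          exact hp.anti x j
  · intro x j
    by_cases h1 : j = d
    · subst h1; exact (hstep x).2.1
    · by_cases h2 : j = d + 1
      · subst h2; exact (hstep x).2.2.2
      · rw [hoth x j h1 h2, hoth (x + 1) j h1 h2]; exact hp.step x j
  · intro x i j hx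
    have r1 : h x d = α + b + 2 := eq_of_forall_lt_iff fun i => by rw [hp.term x i d hx, hf1]
    have r2 : h x (d + 1) = α :=
      eq_of_forall_lt_iff fun i => by rw [hp.term x i (d + 1) hx, hf2]
    obtain ⟨a, c, ha, hc, h1, h2⟩ := hrep x
    rw [hpath.2.2.2 x hx] at h2
    by_cases j1 : j = d
    · subst j1
      rw [ha, hg1]; omega
    · by_cases j2 : j = d + 1
      · subst j2
        rw [hc, hg2]; omega
      · rw [hoth x j j1 j2, hfg i j j1 j2, hp.term x i j hx]
  · intro x
    rw [← hp.cont x]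
    have m1 : d ∈ Finset.range W := Finset.mem_range.2 (by omega)
    have m2 : d + 1 ∈ (Finset.range W).erase d :=
      Finset.mem_erase.2 ⟨by omega, Finset.mem_range.2 hW⟩
    rw [← Finset.add_sum_erase _ _ m1, ← Finset.add_sum_erase _ _ m2,
      ← Finset.add_sum_erase _ _ m1, ← Finset.add_sum_erase _ _ m2, ← add_assoc, ← add_assoc]
    congr 1
    · obtain ⟨a, c, ha, hc, h1, h2⟩ := hrep x
      obtain ⟨a', c', ha', hc', h1', h2'⟩ := hrep (x + 1)
      have := hstep x
      rw [ha, hc, ha', hc'] at *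
      have h3 := hp.mono x d
      have h4 := hp.mono x (d + 1)
      omega
    · apply Finset.sum_congr rfl
      intro j hj
      simp only [Finset.mem_erase] at hj
      rw [hoth x j hj.2.1 hj.1, hoth (x + 1) j hj.2.1 hj.1]

theorem pat_injection {f g : ℕ → ℕ} {W N : ℕ} {w : ℕ → ℕ}
    {d α b : ℕ} (hf1 : ∀ i, d < f i ↔ i < α + b + 2)
    (hf2 : ∀ i, d + 1 < f i ↔ i < α)
    (hg1 : ∀ i, d < g i ↔ i < α + b + 1) (hg2 : ∀ i, d + 1 < g i ↔ i < α + 1)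
    (hfg : ∀ i j, j ≠ d → j ≠ d + 1 → (j < g i ↔ j < f i)) (hW : d + 1 < W)
    (hαb : 2 * α ≤ b * (b + 3)) :
    ∃ Ψ : (ℕ → ℕ → ℕ) → (ℕ → ℕ → ℕ), (∀ h, IsPat f W N w h → IsPat g W N w (Ψ h)) ∧
      ∀ h h', IsPat f W N w h → IsPat f W N w h' → Ψ h = Ψ h' → h = h' := by
  have key : ∀ (e : ℕ → Bool) (u : ℕ → ℕ), ∃ Φ : (ℕ → ℕ) → (ℕ → ℕ),
      (∃ M, stepCount e N = 2 * M + (b + 2) ∧ 2 * M ≤ b * (b + 3)) →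
      (∀ p, IsPath e u N (b + 2) p → IsPath e u N b (Φ p)) ∧
      ∀ p q, IsPath e u N (b + 2) p → IsPath e u N (b + 2) q → Φ p = Φ q → p = q := by
    intro e u
    by_cases hM : ∃ M, stepCount e N = 2 * M + (b + 2) ∧ 2 * M ≤ b * (b + 3)
    · obtain ⟨M, h1, h2⟩ := hM
      obtain ⟨Φ, hΦ⟩ := exists_path_injection e u N M b h1 h2
      exact ⟨Φ, fun _ => hΦ⟩
    · exact ⟨id, fun hh => absurd hh hM⟩
  choose Φ hΦ using key
  have hcond : ∀ h, IsPat f W N w h →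
      ∃ M, stepCount (colStep d h) N = 2 * M + (b + 2) ∧ 2 * M ≤ b * (b + 3) := by
    intro h hp
    obtain ⟨k, hk, hs⟩ := stepCount_col hp d N
    have h1 : h N d = α + b + 2 := eq_of_forall_lt_iff fun i => by rw [hp.term N i d le_rfl, hf1]
    have h2 : h N (d + 1) = α :=
      eq_of_forall_lt_iff fun i => by rw [hp.term N i (d + 1) le_rfl, hf2]
    simp only [colSum] at hs
    exact ⟨α - k, by omega, by omega⟩
  refine ⟨fun h => colReplace d h (Φ (colStep d h) (colBound d h) (colDiff d h)), ?_, ?_⟩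
  · intro h hp
    exact isPat_colReplace hp hf1 hf2 hg1 hg2 hfg hW
      ((hΦ _ _ (hcond h hp)).1 _ (isPath_colDiff hp hf1 hf2))
  · intro h h' hp hp' heq
    have P := isPath_colDiff hp hf1 hf2
    have P' := isPath_colDiff hp' hf1 hf2
    obtain ⟨-, -, R⟩ := path_facts hp ((hΦ _ _ (hcond h hp)).1 _ P)
    obtain ⟨-, -, R'⟩ := path_facts hp' ((hΦ _ _ (hcond h' hp')).1 _ P')
    have hoth : ∀ x j, j ≠ d → j ≠ d + 1 → h x j = h' x j := by
      intro x j h1 h2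
      have := congrFun (congrFun heq x) j
      simpa [colReplace, h1, h2] using this
    have hsd : ∀ x, colSum d h x = colSum d h' x ∧
        Φ (colStep d h) (colBound d h) (colDiff d h) x
          = Φ (colStep d h') (colBound d h') (colDiff d h') x := by
      intro x
      obtain ⟨a, c, ha, hc, h1, h2⟩ := R x
      obtain ⟨a', c', ha', hc', h1', h2'⟩ := R' x
      have e1 := congrFun (congrFun heq x) d
      have e2 := congrFun (congrFun heq x) (d + 1)
      simp only at e1 e2
      rw [ha, ha'] at e1
      rw [hc, hc'] at e2
      simp only [colSum]
      omega
    have hS : colSum d h = colSum d h' := funext fun x => (hsd x).1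
    have hE : colStep d h = colStep d h' := by
      funext x
      simp only [colStep, hS]
    have hU : colBound d h = colBound d h' := by
      funext x
      simp only [colBound, hS, hoth x (d + 2) (by omega) (by omega)]
      split_ifs with h0
      · rfl
      · rw [hoth x (d - 1) (by omega) (by omega)]
    have hP : Φ (colStep d h) (colBound d h) (colDiff d h)
        = Φ (colStep d h) (colBound d h) (colDiff d h') := by
      funext x
      rw [(hsd x).2, hE, hU]
    have hD : colDiff d h = colDiff d h' :=
      (hΦ _ _ (hcond h hp)).2 _ _ P (by rw [hE, hU]; exact P') hP
    funext x j
    have s1 := congrFun hS x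
    have s2 := congrFun hD x
    have a1 := hp.anti x d
    have a2 := hp'.anti x d
    simp only [colSum, colDiff] at s1 s2
    by_cases h1 : j = d
    · subst h1; omega
    · by_cases h2 : j = d + 1
      · subst h2; omega
      · exact hoth x j h1 h2

theorem kostka_le {l m ν : List ℕ} {W d α b : ℕ}
    (hl : ∀ i j, i ≤ j → l.getD j 0 ≤ l.getD i 0)
    (hlW : ∀ i, l.getD i 0 ≤ W) (hmW : ∀ i, m.getD i 0 ≤ W)
    (hf1 : ∀ i, d < l.getD i 0 ↔ i < α + b + 2)
    (hf2 : ∀ i, d + 1 < l.getD i 0 ↔ i < α)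
    (hg1 : ∀ i, d < m.getD i 0 ↔ i < α + b + 1) (hg2 : ∀ i, d + 1 < m.getD i 0 ↔ i < α + 1)
    (hfg : ∀ i j, j ≠ d → j ≠ d + 1 → (j < m.getD i 0 ↔ j < l.getD i 0)) (hW : d + 1 < W)
    (hαb : 2 * α ≤ b * (b + 3)) : kostka l ν ≤ kostka m ν := by
  obtain ⟨Ψ, hΨ, hΨi⟩ := pat_injection (f := fun i => l.getD i 0) (g := fun i => m.getD i 0)
    (N := ν.length) (w := fun k => ν.getD k 0) hf1 hf2 hg1 hg2 hfg hW hαb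
  have key : ∀ T : {T : ℕ → ℕ → ℕ // IsSSYT l T ∧ HasContent l T ν},
      ∃ T' : {T : ℕ → ℕ → ℕ // IsSSYT m T ∧ HasContent m T ν}, ∃ h,
        PatRel (fun i => l.getD i 0) T.1 h ∧
        IsPat (fun i => l.getD i 0) W ν.length (fun k => ν.getD k 0) h ∧
        PatRel (fun i => m.getD i 0) T'.1 (Ψ h) := by
    rintro ⟨T, hT, hc⟩
    obtain ⟨h, hr, hp⟩ := exists_pat hl hlW hT hc
    obtain ⟨T', hr', hT', hc'⟩ := exists_tab hmW (hΨ h hp)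
    exact ⟨⟨T', hT', hc'⟩, h, hr, hp, hr'⟩
  choose F H h1 h2 h3 using key
  have := finite_tab m ν
  refine Nat.card_le_card_of_injective F ?_
  intro T T' hTT
  have e1 := patRel_unique_pat (h3 T) (hTT ▸ h3 T')
  have e2 := hΨi _ _ (h2 T) (h2 T') e1
  apply Subtype.ext
  exact patRel_unique_tab T.2.1 T'.2.1 (h1 T) (e2 ▸ h1 T')


theorem list_ext_getD {l m : List ℕ} (hl : ∀ x ∈ l, 0 < x) (hm : ∀ x ∈ m, 0 < x)
    (h : ∀ i, l.getD i 0 = m.getD i 0) : l = m := by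
  have hlen : ∀ (l : List ℕ), (∀ x ∈ l, 0 < x) → ∀ i, i < l.length ↔ 0 < l.getD i 0 := by
    intro l hl i
    constructor
    · intro hi
      rw [List.getD_eq_getElem _ _ hi]
      exact hl _ (List.getElem_mem hi)
    · intro hi
      by_contra hh
      rw [List.getD_eq_default _ _ (by omega)] at hi
      omega
  apply List.ext_getElem
  · exact eq_of_forall_lt_iff fun i => by rw [hlen l hl, hlen m hm, h]
  · intro i h1 h2
    have := h i
    rwa [List.getD_eq_getElem _ _ h1, List.getD_eq_getElem _ _ h2] at this

theorem getD_lam (pre suf : List ℕ) (c β i : ℕ) :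
    (pre ++ List.replicate β c ++ suf).getD i 0 =
      if i < pre.length then pre.getD i 0 else
      if i < pre.length + β then c else suf.getD (i - (pre.length + β)) 0 := by
  simp only [List.getD_eq_getElem?_getD, List.getElem?_append, List.length_append,
    List.length_replicate, List.getElem?_replicate]
  split_ifs <;> first | rfl | omega

theorem getD_mov (pre suf : List ℕ) (c b i : ℕ) (hc : 1 ≤ c)
    (hs : ∀ x ∈ suf, x < c) (hs' : ∀ x ∈ suf, 0 < x) :
    (movedShape c (b + 2) pre suf).getD i 0 =
      if i < pre.length then pre.getD i 0 else
      if i = pre.length then c + 1 else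
      if i < pre.length + b + 1 then c else
      if i = pre.length + b + 1 then c - 1 else suf.getD (i - (pre.length + b + 2)) 0 := by
  have hfil : ∀ k, (((c - 1) :: suf).filter (fun x => x ≠ 0)).getD k 0
      = ((c - 1) :: suf).getD k 0 := by
    intro k
    by_cases h1 : c = 1
    · have : suf = [] := by
        rw [List.eq_nil_iff_forall_not_mem]
        intro x hx
        have := hs x hx
        have := hs' x hx
        omega
      subst this; subst h1
      cases k <;> simp
    · rw [List.filter_eq_self.2]
      intro x hx
      rw [List.mem_cons] at hx
      rcases hx with rfl | hx
      · simp; omega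
      · have := hs' x hx
        simp; omega
  have e : movedShape c (b + 2) pre suf = (pre ++ [c + 1] ++ List.replicate b c) ++
      ((c - 1) :: suf).filter (fun x => x ≠ 0) := by
    simp [movedShape]
  rw [e]
  have hlen : (pre ++ [c + 1] ++ List.replicate b c).length = pre.length + b + 1 := by
    simp; omega
  by_cases hi : i < pre.length + b + 1
  · rw [List.getD_append _ _ _ _ (by rw [hlen]; exact hi)]
    simp only [List.getD_eq_getElem?_getD, List.getElem?_append, List.length_append,
      List.length_replicate, List.getElem?_replicate, List.length_singleton]
    split_ifs <;> first | rfl | omega | skip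
    have : i - pre.length = 0 := by omega
    simp [this]
  · rw [List.getD_append_right _ _ _ _ (by rw [hlen]; omega), hfil, hlen]
    rw [if_neg (by omega), if_neg (by omega), if_neg (by omega)]
    split_ifs with h
    · simp [h]
    · rw [show i - (pre.length + b + 1) = (i - (pre.length + b + 2)) + 1 by omega]
      rfl

/-- If `β ≥ α + 2`, or `β = α + 1` with `α ≥ 2`, or `β = α` with
`α ≥ 4`, then `μ` (obtained from `λ = (pre, c^β, suf)` by moving one box) covers
`λ` in the immersion poset on partitions of `n`. -/
theorem immersion_cover_of_moved_box (n c α β : ℕ) (pre suf : List ℕ) (hc : 1 ≤ c)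
    (hα : pre.length = α)
    (hpre : ∀ x ∈ pre, c < x) (hsuf : ∀ x ∈ suf, x < c)
    (hlam : IsPartitionOf n (pre ++ List.replicate β c ++ suf))
    (hcase : α + 2 ≤ β ∨ (β = α + 1 ∧ 2 ≤ α) ∨ (β = α ∧ 4 ≤ α)) :
    ImmersionCovBy n (pre ++ List.replicate β c ++ suf) (movedShape c β pre suf) := by
  obtain ⟨hlp, hl0, -⟩ := id hlam
  have hβ2 : 2 ≤ β := by omega
  obtain ⟨b, rfl⟩ : ∃ b, β = b + 2 := ⟨β - 2, by omega⟩
  have hαb : 2 * α ≤ b * (b + 3) := by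
    rcases hcase with h | ⟨h, h'⟩ | ⟨h, h'⟩
    · nlinarith
    · have : α = b + 1 := by omega
      subst this
      nlinarith
    · have : α = b + 2 := by omega
      subst this
      nlinarith
  have hsuf0 : ∀ x ∈ suf, 0 < x := fun x hx => hl0 x (by simp [hx])
  set l := pre ++ List.replicate (b + 2) c ++ suf with hldef
  set m := movedShape c (b + 2) pre suf with hmdef
  have hL : ∀ i, l.getD i 0 = if i < α then pre.getD i 0 else
      if i < α + (b + 2) then c else suf.getD (i - (α + (b + 2))) 0 := by
    intro i; rw [hldef, getD_lam, hα]
  have hM : ∀ i, m.getD i 0 = if i < α then pre.getD i 0 else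
      if i = α then c + 1 else if i < α + b + 1 then c else
      if i = α + b + 1 then c - 1 else suf.getD (i - (α + b + 2)) 0 := by
    intro i; rw [hmdef, getD_mov _ _ _ _ _ hc hsuf hsuf0, hα]
  have hpre' : ∀ i, i < α → c < pre.getD i 0 := by
    intro i hi
    rw [List.getD_eq_getElem _ _ (by omega)]
    exact hpre _ (List.getElem_mem _)
  have hsuf' : ∀ i, suf.getD i 0 < c := by
    intro i
    by_cases hi : i < suf.length
    · rw [List.getD_eq_getElem _ _ hi]
      exact hsuf _ (List.getElem_mem _)
    · rw [List.getD_eq_default _ _ (by omega)]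
      omega
  have hla := getD_anti hlp
  -- relations between the two shapes, row by row
  have hout : ∀ i, i ≠ α → i ≠ α + b + 1 → m.getD i 0 = l.getD i 0 := by
    intro i h1 h2
    rw [hL, hM]
    split_ifs <;> first | rfl | omega
  have hLblk : ∀ i, α ≤ i → i < α + b + 2 → l.getD i 0 = c := by
    intro i h1 h2
    rw [hL, if_neg (by omega), if_pos (by omega)]
  have hMα : m.getD α 0 = c + 1 := by
    rw [hM, if_neg (by omega), if_pos rfl]
  have hMβ : m.getD (α + b + 1) 0 = c - 1 := by
    rw [hM, if_neg (by omega), if_neg (by omega), if_neg (by omega), if_pos rfl]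
  have hLlo : ∀ i, i < α → c < l.getD i 0 := by
    intro i hi
    rw [hL, if_pos hi]
    exact hpre' i hi
  have hLhi : ∀ i, α + b + 2 ≤ i → l.getD i 0 < c := by
    intro i hi
    rw [hL, if_neg (by omega), if_neg (by omega)]
    exact hsuf' _
  have hma : ∀ i j, i ≤ j → m.getD j 0 ≤ m.getD i 0 := by
    refine fun i j hij => antitone_nat_of_succ_le (f := fun i => m.getD i 0) ?_ hij
    intro i
    have a1 := hla i (i + 1) (by omega)
    by_cases c1 : i = α
    · subst c1
      rw [hMα]
      by_cases c2 : b = 0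
      · subst c2
        rw [show i + 1 = i + 0 + 1 by omega, hMβ]; omega
      · rw [hout (i + 1) (by omega) (by omega), hLblk (i + 1) (by omega) (by omega)]; omega
    · by_cases c2 : i = α + b + 1
      · subst c2
        rw [hMβ, hout (α + b + 1 + 1) (by omega) (by omega)]
        have := hLhi (α + b + 1 + 1) (by omega)
        omega
      · rw [hout i c1 c2]
        by_cases c3 : i + 1 = α
        · rw [c3, hMα]
          exact hLlo i (by omega)
        · by_cases c4 : i + 1 = α + b + 1
          · rw [c4, hMβ, hLblk i (by omega) (by omega)]; omega
          · rw [hout (i + 1) c3 c4]; exact a1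
  have hle : ImmersionLE n l m := by
    intro ν _
    refine kostka_le (W := l.sum + m.sum + c + 1) (d := c - 1) (α := α) (b := b) hla
      (fun i => le_trans (getD_le_sum l i) (by omega))
      (fun i => le_trans (getD_le_sum m i) (by omega)) ?_ ?_ ?_ ?_ ?_ (by omega) hαb
    · intro i
      rcases lt_or_ge i α with h1 | h1
      · have := hLlo i h1; omega
      · rcases lt_or_ge i (α + b + 2) with h2 | h2
        · have := hLblk i h1 h2; omega
        · have := hLhi i h2; omega
    · intro i
      rcases lt_or_ge i α with h1 | h1
      · have := hLlo i h1; omega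
      · rcases lt_or_ge i (α + b + 2) with h2 | h2
        · have := hLblk i h1 h2; omega
        · have := hLhi i h2; omega
    · intro i
      rcases lt_or_ge i α with h1 | h1
      · have := hLlo i h1; have := hout i (by omega) (by omega); omega
      · by_cases c1 : i = α
        · subst c1; omega
        · by_cases c2 : i = α + b + 1
          · subst c2; omega
          · rw [hout i c1 c2]
            rcases lt_or_ge i (α + b + 2) with h2 | h2
            · have := hLblk i h1 h2; omega
            · have := hLhi i h2; omega
    · intro i
      rcases lt_or_ge i α with h1 | h1
      · have := hLlo i h1; have := hout i (by omega) (by omega); omega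
      · by_cases c1 : i = α
        · subst c1; omega
        · by_cases c2 : i = α + b + 1
          · subst c2; omega
          · rw [hout i c1 c2]
            rcases lt_or_ge i (α + b + 2) with h2 | h2
            · have := hLblk i h1 h2; omega
            · have := hLhi i h2; omega
    · intro i j h1 h2
      by_cases c1 : i = α
      · subst c1
        rw [hMα, hLblk i (by omega) (by omega)]; omega
      · by_cases c2 : i = α + b + 1
        · subst c2
          rw [hMβ, hLblk _ (by omega) (by omega)]; omega
        · rw [hout i c1 c2]
  have hne : l ≠ m := by
    intro h
    have h1 := hLblk α (by omega) (by omega)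
    rw [h, hMα] at h1
    omega
  refine ⟨⟨hle, hne⟩, ?_⟩
  rintro ν hν ⟨hlν, hneν⟩ ⟨hνm, hneν'⟩
  have hνa := getD_anti hν.1
  have d1 : ∀ k, ∑ i ∈ Finset.range k, l.getD i 0 ≤ ∑ i ∈ Finset.range k, ν.getD i 0 :=
    dom_of_kostka_pos hνa (lt_of_lt_of_le (kostka_self_pos hlp) (hlν l hlam))
  have d2 : ∀ k, ∑ i ∈ Finset.range k, ν.getD i 0 ≤ ∑ i ∈ Finset.range k, m.getD i 0 :=
    dom_of_kostka_pos hma (lt_of_lt_of_le (kostka_self_pos hν.1) (hνm ν hν))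
  -- partial sums of the two shapes
  have s1 : ∀ k, k ≤ α →
      ∑ i ∈ Finset.range k, m.getD i 0 = ∑ i ∈ Finset.range k, l.getD i 0 := by
    intro k hk
    apply Finset.sum_congr rfl
    intro i hi
    rw [Finset.mem_range] at hi
    exact hout i (by omega) (by omega)
  have s2 : ∀ k, k ≤ b →
      ∑ i ∈ Finset.range (α + 1 + k), m.getD i 0
        = ∑ i ∈ Finset.range (α + 1 + k), l.getD i 0 + 1 := by
    intro k
    induction k with
    | zero =>
      intro _
      have := s1 α le_rfl
      rw [add_zero, Finset.sum_range_succ, Finset.sum_range_succ, hMα,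
        hLblk α le_rfl (by omega), this]
      ring
    | succ k ih =>
      intro hk
      have := ih (by omega)
      rw [← add_assoc, Finset.sum_range_succ, Finset.sum_range_succ, this,
        hout _ (by omega) (by omega)]
      ring
  have s3 : ∀ k, ∑ i ∈ Finset.range (α + b + 2 + k), m.getD i 0
        = ∑ i ∈ Finset.range (α + b + 2 + k), l.getD i 0 := by
    intro k
    induction k with
    | zero =>
      have := s2 b le_rfl
      rw [show α + 1 + b = α + b + 1 by ring] at this
      have q1 := Finset.sum_range_succ (fun i => m.getD i 0) (α + b + 1)
      have q2 := Finset.sum_range_succ (fun i => l.getD i 0) (α + b + 1)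
      simp only [hMβ, hLblk (α + b + 1) (by omega) (by omega)] at q1 q2
      rw [add_zero]
      change ∑ i ∈ Finset.range (α + b + 2), _ = _ at q1
      change ∑ i ∈ Finset.range (α + b + 2), _ = _ at q2
      omega
    | succ k ih =>
      rw [← add_assoc, Finset.sum_range_succ, Finset.sum_range_succ, ih,
        hout _ (by omega) (by omega)]
  set SL := fun k => ∑ i ∈ Finset.range k, l.getD i 0 with hSL
  set SV := fun k => ∑ i ∈ Finset.range k, ν.getD i 0 with hSV
  have rL : ∀ k, SL (k + 1) = SL k + l.getD k 0 := fun k => Finset.sum_range_succ _ _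
  have rV : ∀ k, SV (k + 1) = SV k + ν.getD k 0 := fun k => Finset.sum_range_succ _ _
  have d1' : ∀ k, SL k ≤ SV k := d1
  have eLo : ∀ k, k ≤ α → SV k = SL k := fun k hk =>
    le_antisymm (le_trans (d2 k) (s1 k hk).le) (d1 k)
  have eMid : ∀ k, k ≤ b → SV (α + 1 + k) ≤ SL (α + 1 + k) + 1 := fun k hk =>
    le_trans (d2 _) (s2 k hk).le
  have eHi : ∀ k, SV (α + b + 2 + k) = SL (α + b + 2 + k) := fun k =>
    le_antisymm (le_trans (d2 _) (s3 k).le) (d1 _)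
  have vLo : ∀ i, i < α → ν.getD i 0 = l.getD i 0 := by
    intro i hi
    have h1 := eLo i (by omega)
    have h2 := eLo (i + 1) (by omega)
    have := rL i
    have := rV i
    omega
  have vHi : ∀ i, α + b + 2 ≤ i → ν.getD i 0 = l.getD i 0 := by
    intro i hi
    obtain ⟨k, rfl⟩ := Nat.exists_eq_add_of_le hi
    have h1 := eHi k
    have h2 := eHi (k + 1)
    have := rL (α + b + 2 + k)
    have := rV (α + b + 2 + k)
    rw [← add_assoc] at h2
    omega
  have eα := eLo α le_rfl
  have eβ := eHi 0
  rw [add_zero] at eβ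
  have t1 := rL α
  have t2 := rV α
  rw [hLblk α le_rfl (by omega)] at t1
  have eα1 := eMid 0 (Nat.zero_le _)
  rw [add_zero] at eα1
  have dα1 := d1' (α + 1)
  by_cases hcα : ν.getD α 0 = c
  · -- the block is unchanged, so `ν = l`
    apply hneν
    have hall : ∀ k, k ≤ b + 2 → SV (α + k) = SL (α + k) := by
      intro k
      induction k with
      | zero => intro _; exact eα
      | succ k ih =>
        intro hk
        have h1 := ih (by omega)
        have h2 := hνa α (α + k) (by omega)
        have h3 := rV (α + k)
        have h4 := rL (α + k)
        rw [hLblk (α + k) (by omega) (by omega)] at h4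
        have h5 := d1' (α + k + 1)
        rw [← add_assoc]
        omega
    apply list_ext_getD hl0 hν.2.1
    intro i
    rcases lt_or_ge i α with h1 | h1
    · exact (vLo i h1).symm
    · rcases lt_or_ge i (α + b + 2) with h2 | h2
      · obtain ⟨k, rfl⟩ := Nat.exists_eq_add_of_le h1
        have h3 := hall k (by omega)
        have h4 := hall (k + 1) (by omega)
        rw [← add_assoc] at h4
        have := rL (α + k)
        have := rV (α + k)
        omega
      · exact (vHi i h2).symm
  · -- the first row of the block grows, so `ν = m`
    apply hneν'
    have hall : ∀ k, k ≤ b → SV (α + 1 + k) = SL (α + 1 + k) + 1 := by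
      intro k
      induction k with
      | zero => intro _; rw [add_zero]; omega
      | succ k ih =>
        intro hk
        have h1 := ih (by omega)
        have h2 := eMid (k + 1) hk
        have h3 := d1' (α + 1 + (k + 1))
        have h4 := d1' (α + 1 + (k + 1) + 1)
        have h5 := rV (α + 1 + k)
        have h6 := rL (α + 1 + k)
        have h7 := rV (α + 1 + (k + 1))
        have h8 := rL (α + 1 + (k + 1))
        rw [hLblk (α + 1 + k) (by omega) (by omega)] at h6
        rw [hLblk (α + 1 + (k + 1)) (by omega) (by omega)] at h8
        have h9 := hνa (α + 1 + k) (α + 1 + (k + 1)) (by omega)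
        rw [← add_assoc (α + 1) k 1] at *
        omega
    have hm0 : ∀ x ∈ m, 0 < x := by
      intro x hx
      simp only [hmdef, movedShape, List.mem_append, List.mem_cons, List.mem_filter] at hx
      rcases hx with hx | hx | hx | hx
      · have := hpre x hx; omega
      · omega
      · have := List.eq_of_mem_replicate hx; omega
      · have := hx.2
        simp at this
        omega
    apply list_ext_getD hν.2.1 hm0
    intro i
    rcases lt_or_ge i α with h1 | h1
    · rw [hout i (by omega) (by omega)]; exact vLo i h1
    · rcases lt_or_ge i (α + b + 2) with h2 | h2
      · by_cases c1 : i = α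
        · subst c1
          rw [hMα]
          omega
        · by_cases c2 : i = α + b + 1
          · subst c2
            have h3 := hall b le_rfl
            rw [show α + 1 + b = α + b + 1 by ring] at h3
            have h4 := rV (α + b + 1)
            have h5 := rL (α + b + 1)
            rw [hLblk _ (by omega) (by omega)] at h5
            rw [hMβ]
            change SV (α + b + 2) = _ at h4
            change SL (α + b + 2) = _ at h5
            omega
          · rw [hout i c1 c2]
            obtain ⟨k, rfl⟩ : ∃ k, i = α + 1 + k := ⟨i - (α + 1), by omega⟩
            have h3 := hall k (by omega)
            have h4 := hall (k + 1) (by omega)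
            rw [← add_assoc] at h4
            have := rL (α + 1 + k)
            have := rV (α + 1 + k)
            omega
      · rw [hout i (by omega) (by omega)]; exact vHi i h2
end

section
/- Let λ = (a, 1^b) be a hook partition of n and let λ^t denote its conjugate (transpose) partition. If λ ≤_D λ^t in dominance order, then λ ≤_I λ^t in the immersion poset. -/
open Finset MvPolynomial

lemma hk_zero (a b : ℕ) : (a :: List.replicate b 1).getD 0 0 = a := by simp

lemma hk_succ (a b i : ℕ) :
    (a :: List.replicate b 1).getD (i + 1) 0 = if i < b then 1 else 0 := by
  simp only [List.getD_cons_succ]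
  split_ifs with h
  · rw [List.getD_eq_getElem _ _ (by simpa using h)]; simp
  · rw [List.getD_eq_default _ _ (by simpa using h)]

/-- the row of a hook tableau, as a list -/
def hkRow (a : ℕ) (T : ℕ → ℕ → ℕ) : List ℕ := (List.range a).map (T 0)

/-- the column of a hook tableau below the corner, as a list -/
def hkCol (b : ℕ) (T : ℕ → ℕ → ℕ) : List ℕ := (List.range b).map (fun i => T (i + 1) 0)

lemma count_map_range (f : ℕ → ℕ) (a k : ℕ) :
    ((List.range a).map f).count k = ((Finset.range a).filter (fun j => f j = k)).card := by
  rw [← Multiset.coe_count, ← Multiset.map_coe, Multiset.count_map]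
  rw [Finset.card_def, Finset.filter_val]
  simp only [eq_comm]
  rfl

lemma hk_content (a b : ℕ) (T : ℕ → ℕ → ℕ) (k : ℕ) :
    Nat.card {c : ℕ × ℕ // c.2 < (a :: List.replicate b 1).getD c.1 0 ∧ T c.1 c.2 = k}
      = (hkRow a T).count k + (hkCol b T).count k := by
  unfold hkRow hkCol
  rw [count_map_range, count_map_range]
  rw [← Finset.card_image_of_injective (f := fun j : ℕ => ((0 : ℕ), j)) _
    (fun x y h => by simpa using h)]
  rw [← Finset.card_image_of_injective (f := fun i : ℕ => (i + 1, (0 : ℕ))) (s := filter _ (range b))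
    (fun x y h => by simpa using h)]
  rw [← Finset.card_union_of_disjoint]
  · apply Nat.subtype_card
    rintro ⟨i, j⟩
    rcases i with _ | i
    · simp
    · simp only [hk_succ, Finset.mem_union, Finset.mem_image, Finset.mem_filter, Finset.mem_range,
        Prod.mk.injEq]
      split_ifs with h
      · constructor
        · rintro (⟨x, _, h1, _⟩ | ⟨x, ⟨h1, h2⟩, h3, h4⟩)
          · exact absurd h1 (by simp)
          · obtain rfl : x = i := by omega
            subst h4
            exact ⟨by omega, h2⟩
        · rintro ⟨h1, h2⟩
          obtain rfl : j = 0 := by omega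
          exact Or.inr ⟨i, ⟨h, h2⟩, rfl, rfl⟩
      · constructor
        · rintro (⟨x, _, h1, _⟩ | ⟨x, ⟨h1, h2⟩, h3, h4⟩)
          · exact absurd h1 (by simp)
          · omega
        · rintro ⟨h1, h2⟩
          omega
  · rw [Finset.disjoint_left]
    rintro ⟨i, j⟩ h1 h2
    simp only [Finset.mem_image, Finset.mem_filter, Prod.mk.injEq] at h1 h2
    obtain ⟨_, _, h1, _⟩ := h1
    obtain ⟨_, _, h2, _⟩ := h2
    omega

lemma hk_row_sorted {a b : ℕ} {T : ℕ → ℕ → ℕ} (h : IsSSYT (a :: List.replicate b 1) T) :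
    (hkRow a T).Pairwise (· ≤ ·) := by
  unfold hkRow
  rw [List.pairwise_map]
  refine (List.pairwise_lt_range (n := a)).imp_of_mem ?_
  intro x y hx hy hxy
  exact h.1 0 x y hxy.le (by simpa using hy)

lemma hk_col_sorted {a b : ℕ} {T : ℕ → ℕ → ℕ} (h : IsSSYT (a :: List.replicate b 1) T) :
    (hkCol b T).Pairwise (· < ·) := by
  unfold hkCol
  rw [List.pairwise_map]
  refine (List.pairwise_lt_range (n := b)).imp_of_mem ?_
  intro x y hx hy hxy
  refine h.2.1 (x + 1) (y + 1) 0 (by omega) ?_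
  rw [hk_succ, if_pos (by simpa using hy)]
  omega

lemma hk_ext {a b : ℕ} {T T' : ℕ → ℕ → ℕ} (h : IsSSYT (a :: List.replicate b 1) T)
    (h' : IsSSYT (a :: List.replicate b 1) T') (hr : hkRow a T = hkRow a T')
    (hc : hkCol b T = hkCol b T') : T = T' := by
  unfold hkRow at hr
  unfold hkCol at hc
  rw [List.map_inj_left] at hr hc
  funext i j
  by_cases hj : (a :: List.replicate b 1).getD i 0 ≤ j
  · rw [h.2.2 i j hj, h'.2.2 i j hj]
  · rcases i with _ | i
    · rw [hk_zero] at hj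
      exact hr j (by simpa using hj)
    · rw [hk_succ] at hj
      split_ifs at hj with hi
      · obtain rfl : j = 0 := by omega
        exact hc i (by simpa using hi)
      · omega

lemma map_range_getD (l : List ℕ) :
    (List.range l.length).map (fun j => l.getD j 0) = l := by
  apply List.ext_getElem
  · simp
  · intro i h1 h2
    simp [h2]

lemma sum_getD (l : List ℕ) : ∑ k ∈ Finset.range l.length, l.getD k 0 = l.sum := by
  induction l with
  | nil => simp
  | cons x l ih =>
    rw [List.length_cons, Finset.sum_range_succ']
    simp only [List.getD_cons_succ, List.getD_cons_zero, List.sum_cons]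
    rw [ih]; omega

lemma getD_pos_iff {ν : List ℕ} (hν : ∀ x ∈ ν, 0 < x) (k : ℕ) :
    0 < ν.getD k 0 ↔ k < ν.length := by
  constructor
  · intro h
    by_contra hk
    rw [List.getD_eq_default _ _ (by omega)] at h
    omega
  · intro h
    rw [List.getD_eq_getElem _ _ h]
    exact hν _ (List.getElem_mem h)

/-- the multiset with content ν -/
def contMS (ν : List ℕ) : Multiset ℕ :=
  ∑ k ∈ Finset.range ν.length, Multiset.replicate (ν.getD k 0) k

lemma count_contMS (ν : List ℕ) (k : ℕ) : (contMS ν).count k = ν.getD k 0 := by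
  unfold contMS
  rw [Multiset.count_sum']
  simp only [Multiset.count_replicate]
  rw [Finset.sum_ite_eq']
  split_ifs with h
  · rfl
  · rw [List.getD_eq_default _ _ (by simpa using h)]

lemma card_contMS (ν : List ℕ) : (contMS ν).card = ν.sum := by
  unfold contMS
  rw [Multiset.card_sum]
  simp only [Multiset.card_replicate]
  exact sum_getD ν

lemma hk_surj {a b : ℕ} (ha : 1 ≤ a) {ν : List ℕ} (hν : IsPartitionOf (a + b) ν)
    (S : Finset ℕ) (hS : S ⊆ Finset.Ico 1 ν.length) (hb : S.card = b) :
    ∃ T, (IsSSYT (a :: List.replicate b 1) T ∧ HasContent (a :: List.replicate b 1) T ν) ∧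
      (hkCol b T).toFinset = S := by
  have hle : S.val ≤ contMS ν := by
    rw [Multiset.le_iff_count]
    intro k
    rw [count_contMS]
    by_cases hk : k ∈ S
    · rw [Multiset.count_eq_one_of_mem S.nodup hk]
      have := Finset.mem_Ico.1 (hS hk)
      exact (getD_pos_iff hν.2.1 k).2 this.2
    · rw [Multiset.count_eq_zero_of_notMem hk]; omega
  obtain ⟨R, hR, hRs⟩ : ∃ R : List ℕ, (R : Multiset ℕ) = contMS ν - S.val ∧ R.Pairwise (· ≤ ·) :=
    ⟨(contMS ν - S.val).sort (· ≤ ·), Multiset.sort_eq _ _, Multiset.pairwise_sort _ _⟩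
  obtain ⟨C, hC, hCs⟩ : ∃ C : List ℕ, (C : Multiset ℕ) = S.val ∧ C.Pairwise (· < ·) :=
    ⟨S.sort (· ≤ ·), Finset.sort_eq _ _, Finset.sortedLT_sort S |>.pairwise⟩
  have hRl : R.length = a := by
    rw [← Multiset.coe_card, hR, Multiset.card_sub hle, card_contMS, hν.2.2]
    change a + b - S.card = a
    omega
  have hCl : C.length = b := by
    rw [← Multiset.coe_card, hC]; exact hb
  have hCmem : ∀ x, x ∈ C ↔ x ∈ S := by
    intro x; rw [← Multiset.mem_coe, hC]; rfl
  have hνl : 0 < ν.length := by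
    rcases ν with _ | ⟨x, ν⟩
    · have := hν.2.2
      simp at this
      omega
    · simp
  have h0R : 0 ∈ R := by
    rw [← Multiset.mem_coe, hR, ← Multiset.count_pos, Multiset.count_sub, count_contMS,
      Multiset.count_eq_zero_of_notMem (s := S.val)]
    · simpa using (getD_pos_iff hν.2.1 0).2 hνl
    · intro h
      have := Finset.mem_Ico.1 (hS h)
      omega
  have hRmono : ∀ i j, i ≤ j → j < a → R.getD i 0 ≤ R.getD j 0 := by
    intro i j hij hj
    rcases hij.eq_or_lt with rfl | hij
    · exact le_rfl
    · rw [List.getD_eq_getElem _ _ (by omega), List.getD_eq_getElem _ _ (by omega)]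
      exact List.pairwise_iff_getElem.1 hRs i j _ _ hij
  have hR0 : R.getD 0 0 = 0 := by
    obtain ⟨i, hi, h⟩ := List.getElem_of_mem h0R
    have := hRmono 0 i (by omega) (by omega)
    rw [List.getD_eq_getElem R _ hi, h] at this
    omega
  let T : ℕ → ℕ → ℕ := fun i j =>
    if i = 0 then R.getD j 0 else if j = 0 then C.getD (i - 1) 0 else 0
  have hrow : hkRow a T = R := by
    rw [← hRl]; exact map_range_getD R
  have hcol : hkCol b T = C := by
    rw [← hCl]; exact map_range_getD C
  refine ⟨T, ⟨⟨?_, ?_, ?_⟩, ?_⟩, ?_⟩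
  · intro i j1 j2 h1 h2
    rcases i with _ | i
    · rw [hk_zero] at h2
      exact hRmono j1 j2 h1 h2
    · rw [hk_succ] at h2
      split_ifs at h2
      · obtain rfl : j2 = 0 := by omega
        obtain rfl : j1 = 0 := by omega
        exact le_rfl
      · omega
  · intro i1 i2 j h1 h2
    obtain ⟨i2, rfl⟩ : ∃ i, i2 = i + 1 := ⟨i2 - 1, by omega⟩
    rw [hk_succ] at h2
    split_ifs at h2 with hi
    · obtain rfl : j = 0 := by omega
      have e2 : T (i2 + 1) 0 = C[i2]'(by omega) := by
        simp [T, List.getElem?_eq_getElem (show i2 < C.length by omega)]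
      rw [e2]
      rcases i1 with _ | i1
      · change R.getD 0 0 < _
        rw [hR0]
        have := Finset.mem_Ico.1 (hS ((hCmem _).1 (List.getElem_mem (show i2 < C.length by omega))))
        omega
      · have e1 : T (i1 + 1) 0 = C[i1]'(by omega) := by
          simp [T, List.getElem?_eq_getElem (show i1 < C.length by omega)]
        rw [e1]
        exact List.pairwise_iff_getElem.1 hCs i1 i2 _ _ (by omega)
    · omega
  · intro i j h
    rcases i with _ | i
    · rw [hk_zero] at h
      exact List.getD_eq_default _ _ (by omega)
    · rw [hk_succ] at h
      split_ifs at h with hi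
      · have : j ≠ 0 := by omega
        simp [T, this]
      · change (if i + 1 = 0 then R.getD j 0 else if j = 0 then C.getD i 0 else 0) = 0
        rw [List.getD_eq_default C _ (by omega)]
        simp
  · intro k
    rw [hk_content, hrow, hcol, ← Multiset.coe_count, ← Multiset.coe_count, hR, hC,
      ← Multiset.count_add, Multiset.sub_add_cancel hle, count_contMS]
  · rw [hcol]
    ext x
    rw [List.mem_toFinset, hCmem]

lemma kostka_hook {a b : ℕ} (ha : 1 ≤ a) {ν : List ℕ} (hν : IsPartitionOf (a + b) ν) :
    kostka (a :: List.replicate b 1) ν = (ν.length - 1).choose b := by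
  have hcard : Nat.card (Finset.powersetCard b (Finset.Ico 1 ν.length)) =
      (ν.length - 1).choose b := by
    rw [Nat.card_eq_fintype_card, Fintype.card_coe, Finset.card_powersetCard, Nat.card_Ico]
  rw [← hcard]
  unfold kostka
  refine Nat.card_eq_of_bijective (fun T => ⟨(hkCol b T.1).toFinset, ?_⟩) ⟨?_, ?_⟩
  · obtain ⟨T, hT, hc⟩ := T
    rw [Finset.mem_powersetCard]
    constructor
    · intro k hk
      rw [List.mem_toFinset] at hk
      change k ∈ hkCol b T at hk
      have h1 := hc k
      rw [hk_content] at h1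
      have h2 := List.count_pos_iff.2 hk
      rw [Finset.mem_Ico]
      refine ⟨?_, (getD_pos_iff hν.2.1 k).1 (by omega)⟩
      obtain ⟨i, hi, rfl⟩ := List.mem_map.1 hk
      have := hT.2.1 0 (i + 1) 0 (by omega) (by rw [hk_succ, if_pos (by simpa using hi)]; omega)
      omega
    · rw [List.toFinset_card_of_nodup ((hk_col_sorted hT).imp fun h => h.ne)]
      simp [hkCol]
  · rintro ⟨T, hT, hc⟩ ⟨T', hT', hc'⟩ h
    have h : (hkCol b T).toFinset = (hkCol b T').toFinset := by simpa using h
    have hcol : hkCol b T = hkCol b T' := by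
      have hp := List.perm_of_nodup_nodup_toFinset_eq ((hk_col_sorted hT).imp fun h => h.ne)
        ((hk_col_sorted hT').imp fun h => h.ne) h
      exact hp.eq_of_pairwise (fun x y _ _ h1 h2 => by omega) (hk_col_sorted hT) (hk_col_sorted hT')
    have hrow : hkRow a T = hkRow a T' := by
      have hp : (hkRow a T).Perm (hkRow a T') := by
        rw [List.perm_iff_count]
        intro k
        have h1 := hc k
        have h2 := hc' k
        rw [hk_content] at h1 h2
        rw [hcol] at h1
        omega
      exact hp.eq_of_pairwise (fun x y _ _ h1 h2 => by omega) (hk_row_sorted hT) (hk_row_sorted hT')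
    exact Subtype.ext (hk_ext hT hT' hrow hcol)
  · rintro ⟨S, hS⟩
    rw [Finset.mem_powersetCard] at hS
    obtain ⟨T, hT, h⟩ := hk_surj ha hν S hS.1 hS.2
    exact ⟨⟨T, hT⟩, Subtype.ext h⟩

lemma choose_aux {m b c : ℕ} (hcb : c ≤ b) (hm : m ≤ c + b) : m.choose b ≤ m.choose c := by
  rcases lt_or_ge m b with h | h
  · rw [Nat.choose_eq_zero_of_lt h]; omega
  · -- monotone on the lower half
    have mono : ∀ y, y ≤ m / 2 → ∀ x, x ≤ y → m.choose x ≤ m.choose y := by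
      intro y
      induction y with
      | zero => intro _ x hx; obtain rfl : x = 0 := by omega
                exact le_rfl
      | succ y ih =>
        intro hy x hx
        rcases hx.eq_or_lt with rfl | hx
        · exact le_rfl
        · exact (ih (by omega) x (by omega)).trans (Nat.choose_le_succ_of_lt_half_left (by omega))
    rw [← Nat.choose_symm h]
    rcases le_or_gt c (m / 2) with hc | hc
    · exact mono c hc _ (by omega)
    · rw [← Nat.choose_symm (show c ≤ m by omega)]
      exact mono _ (by omega) _ (by omega)

/-- For a hook `λ = (a, 1^b)` of `n` with conjugate
`λ^t = (b+1, 1^{a-1})`, if `λ ≤_D λ^t` then `λ ≤_I λ^t`. -/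
theorem hook_transpose_immersion (n a b : ℕ) (ha : 1 ≤ a) (hn : n = a + b)
    (hdom : DomLE (a :: List.replicate b 1) ((b + 1) :: List.replicate (a - 1) 1)) :
    ImmersionLE n (a :: List.replicate b 1) ((b + 1) :: List.replicate (a - 1) 1) := by
  intro ν hν
  subst hn
  have h1 := hdom 1
  simp at h1
  have hlen : ν.length ≤ a + b := by
    rw [← hν.2.2]
    exact List.length_le_sum_of_one_le ν (fun x hx => hν.2.1 x hx)
  rw [kostka_hook ha hν, kostka_hook (by omega) (by rwa [show b + 1 + (a - 1) = a + b by omega])]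
  exact choose_aux (by omega) (by omega)
end

section
/- (1) Let n = 2k and for 0 ≤ j ≤ k set λ^j = (2^{k−j}, 1^{2j}). Then for 0 ≤ i, j ≤ k, the Kostka number K_{λ^i, λ^j} equals f^{(j+i, j−i)}, the number of standard Young tableaux of the two-row shape (j+i, j−i), when i ≤ j, and K_{λ^i, λ^j} = 0 when i > j. (2) Let n = 2k+1 and for 0 ≤ j ≤ k set λ^j = (2^{k−j}, 1^{2j+1}). Then K_{λ^i, λ^j} = f^{(j+i+1, j−i)} when i ≤ j, and K_{λ^i, λ^j} = 0 when i > j. -/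
open Finset MvPolynomial

theorem kostka_aux_zero {a : ℕ} {l ν : List ℕ} {T : ℕ → ℕ → ℕ} (h : IsSSYT (a :: l) T)
    (hc : HasContent (a :: l) T (a :: ν)) (c : ℕ) : T 0 c = 0 := by
  by_cases hca : c < a
  swap
  · exact h.2.2 0 c (by simpa using hca)
  have h0 := hc 0
  simp only [List.getD_cons_zero] at h0
  have e : {c : ℕ × ℕ // c.2 < (a :: l).getD c.1 0 ∧ T c.1 c.2 = 0} ≃
      {c : ℕ // c ∈ (Finset.range a).filter (fun c => T 0 c = 0)} :=
    { toFun := fun x => ⟨x.1.2, by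
        obtain ⟨⟨r, c⟩, h1, h2⟩ := x
        rcases r with _ | r
        · simpa using ⟨h1, h2⟩
        · have := h.2.1 0 (r + 1) c (by omega) h1
          simp only at h2
          omega⟩
      invFun := fun x => ⟨(0, x.1), by
        have := Finset.mem_filter.1 x.2
        simpa using this⟩
      left_inv := by
        rintro ⟨⟨r, c⟩, h1, h2⟩
        rcases r with _ | r
        · rfl
        · have := h.2.1 0 (r + 1) c (by omega) h1
          simp only at h2
          omega
      right_inv := fun x => rfl }
  rw [Nat.card_congr e, Nat.card_eq_fintype_card, Fintype.card_coe] at h0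
  have h1 := Finset.eq_of_subset_of_card_le (Finset.filter_subset (fun c => T 0 c = 0)
    (Finset.range a)) (by simp [h0])
  have h2 : c ∈ (Finset.range a).filter (fun c => T 0 c = 0) := by
    rw [h1]; simpa using hca
  exact (Finset.mem_filter.1 h2).2

theorem kostka_aux_pos {a : ℕ} {l : List ℕ} {T : ℕ → ℕ → ℕ} (h : IsSSYT (a :: l) T)
    {r c : ℕ} (hr : c < l.getD r 0) : 0 < T (r + 1) c := by
  have := h.2.1 0 (r + 1) c (by omega) (by simpa using hr)
  omega

/-- Add a row of zeros on top of a tableau. -/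
def kostkaUp (l : List ℕ) (T : ℕ → ℕ → ℕ) : ℕ → ℕ → ℕ
  | 0, _ => 0
  | r + 1, c => if c < l.getD r 0 then T r c + 1 else 0

/-- Remove the top row of a tableau. -/
def kostkaDown (T : ℕ → ℕ → ℕ) : ℕ → ℕ → ℕ := fun r c => T (r + 1) c - 1

theorem kostka_cells_shift (a : ℕ) (l : List ℕ) (T T' : ℕ → ℕ → ℕ) (h0 : ∀ c, T 0 c = 0)
    (h : ∀ r c, c < l.getD r 0 → T (r + 1) c = T' r c + 1) (v : ℕ) :
    Nat.card {c : ℕ × ℕ // c.2 < (a :: l).getD c.1 0 ∧ T c.1 c.2 = v + 1} =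
      Nat.card {c : ℕ × ℕ // c.2 < l.getD c.1 0 ∧ T' c.1 c.2 = v} := by
  symm
  refine Nat.card_congr (Equiv.ofBijective (fun x => ⟨(x.1.1 + 1, x.1.2), ?_⟩) ⟨?_, ?_⟩)
  · obtain ⟨⟨r, c⟩, h1, h2⟩ := x
    refine ⟨by simpa using h1, ?_⟩
    simp only at h1 h2 ⊢
    rw [h r c h1, h2]
  · rintro ⟨⟨r, c⟩, h1⟩ ⟨⟨r', c'⟩, h2⟩ h3
    simpa using h3
  · rintro ⟨⟨r, c⟩, h1, h2⟩
    rcases r with _ | r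
    · simp [h0] at h2
    · simp only [List.getD_cons_succ] at h1 h2
      refine ⟨⟨(r, c), h1, ?_⟩, rfl⟩
      have := h r c h1
      simp only
      omega

theorem kostka_cons (a : ℕ) (l ν : List ℕ)
    (hl : ∀ r1 r2, r1 ≤ r2 → l.getD r2 0 ≤ l.getD r1 0) :
    kostka (a :: l) (a :: ν) = kostka l ν := by
  unfold kostka
  refine Nat.card_congr
    { toFun := fun T => ⟨kostkaDown T.1, ?_⟩
      invFun := fun T => ⟨kostkaUp l T.1, ?_⟩
      left_inv := ?_
      right_inv := ?_ }
  · obtain ⟨T, h, hc⟩ := T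
    refine ⟨⟨?_, ?_, ?_⟩, ?_⟩
    · intro r c1 c2 h1 h2
      have := h.1 (r + 1) c1 c2 h1 (by simpa using h2)
      simp only [kostkaDown]
      omega
    · intro r1 r2 c h1 h2
      have h3 := h.2.1 (r1 + 1) (r2 + 1) c (by omega) (by simpa using h2)
      have h5 := kostka_aux_pos h (lt_of_lt_of_le h2 (hl r1 r2 h1.le))
      simp only [kostkaDown]
      omega
    · intro r c h1
      have := h.2.2 (r + 1) c (by simpa using h1)
      simp [kostkaDown, this]
    · intro v
      have := hc (v + 1)
      rw [kostka_cells_shift a l T (kostkaDown T) (kostka_aux_zero h hc)] at this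
      · simpa using this
      · intro r c h1
        have := kostka_aux_pos h h1
        simp only [kostkaDown]
        omega
  · obtain ⟨T, h, hc⟩ := T
    refine ⟨⟨?_, ?_, ?_⟩, ?_⟩
    · intro r c1 c2 h1 h2
      rcases r with _ | r
      · simp [kostkaUp]
      · simp only [List.getD_cons_succ] at h2
        have := h.1 r c1 c2 h1 h2
        simp only [kostkaUp]
        rw [if_pos h2, if_pos (by omega)]
        omega
    · intro r1 r2 c h1 h2
      rcases r2 with _ | r2
      · omega
      simp only [List.getD_cons_succ] at h2
      rcases r1 with _ | r1
      · simp only [kostkaUp]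
        rw [if_pos h2]
        omega
      · have := h.2.1 r1 r2 c (by omega) h2
        simp only [kostkaUp]
        rw [if_pos h2]
        split_ifs <;> omega
    · intro r c h1
      rcases r with _ | r
      · rfl
      · simp only [List.getD_cons_succ] at h1
        simp only [kostkaUp]
        rw [if_neg (by omega)]
    · intro v
      rcases v with _ | v
      · have e : {c : ℕ × ℕ // c.2 < (a :: l).getD c.1 0 ∧ kostkaUp l T c.1 c.2 = 0} ≃ Fin a :=
          { toFun := fun x => ⟨x.1.2, by
              obtain ⟨⟨r, c⟩, h1, h2⟩ := x
              rcases r with _ | r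
              · simpa using h1
              · simp only [List.getD_cons_succ, kostkaUp] at h1 h2
                rw [if_pos h1] at h2
                omega⟩
            invFun := fun x => ⟨(0, x.1), by simp [kostkaUp]⟩
            left_inv := by
              rintro ⟨⟨r, c⟩, h1, h2⟩
              rcases r with _ | r
              · rfl
              · simp only [List.getD_cons_succ, kostkaUp] at h1 h2
                rw [if_pos h1] at h2
                omega
            right_inv := fun x => rfl }
        rw [Nat.card_congr e]
        simp
      · rw [kostka_cells_shift a l (kostkaUp l T) T (fun _ => rfl)]
        · simpa using hc v
        · intro r c h1
          simp only [kostkaUp]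
          rw [if_pos h1]
  · rintro ⟨T, h, hc⟩
    apply Subtype.ext
    funext r c
    rcases r with _ | r
    · exact (kostka_aux_zero h hc c).symm
    · simp only [kostkaUp, kostkaDown]
      split_ifs with h1
      · have := kostka_aux_pos h h1
        omega
      · exact (h.2.2 (r + 1) c (by simpa using h1)).symm
  · rintro ⟨T, h, hc⟩
    apply Subtype.ext
    funext r c
    simp only [kostkaUp, kostkaDown]
    split_ifs with h1
    · omega
    · exact (h.2.2 r c (by omega)).symm

theorem kostka_one_col (l ν : List ℕ) (hl : ∀ r, l.getD r 0 ≤ 1) : kostka l (2 :: ν) = 0 := by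
  unfold kostka
  rw [Nat.card_eq_zero]
  left
  refine ⟨fun ⟨T, h, hc⟩ => ?_⟩
  have h0 := hc 0
  have : Subsingleton {c : ℕ × ℕ // c.2 < l.getD c.1 0 ∧ T c.1 c.2 = 0} := by
    refine ⟨?_⟩
    rintro ⟨⟨r, c⟩, h1, h2⟩ ⟨⟨r', c'⟩, h1', h2'⟩
    simp only at h1 h2 h1' h2'
    have := hl r
    have := hl r'
    obtain rfl : c = 0 := by omega
    obtain rfl : c' = 0 := by omega
    obtain h3 | rfl | h3 := lt_trichotomy r r'
    · have := h.2.1 r r' 0 h3 h1'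
      omega
    · rfl
    · have := h.2.1 r' r 0 h3 h1
      omega
  have := Finite.card_le_one_iff_subsingleton.2 this
  rw [h0] at this
  simp at this

theorem kostka_getD (d s r : ℕ) : (List.replicate d 2 ++ List.replicate s 1).getD r 0 =
    if r < d then 2 else if r < d + s then 1 else 0 := by
  simp only [List.getD_eq_getElem?_getD, List.getElem?_append, List.length_replicate,
    List.getElem?_replicate]
  split_ifs <;> first | rfl | omega

theorem kostka_strip (d q s : ℕ) (ν : List ℕ) :
    kostka (List.replicate (d + q) 2 ++ List.replicate s 1) (List.replicate d 2 ++ ν) =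
      kostka (List.replicate q 2 ++ List.replicate s 1) ν := by
  induction d with
  | zero => simp
  | succ d ih =>
    rw [← ih, show d + 1 + q = (d + q) + 1 by omega, List.replicate_succ, List.replicate_succ,
      List.cons_append, List.cons_append, kostka_cons]
    intro r1 r2 h
    rw [kostka_getD, kostka_getD]
    split_ifs <;> omega

theorem kostka_cells_finite (l : List ℕ) : {c : ℕ × ℕ | c.2 < l.getD c.1 0}.Finite := by
  refine ((Set.finite_Iio l.length).prod (Set.finite_Iio l.sum)).subset ?_
  rintro ⟨r, c⟩ h
  simp only [Set.mem_ofPred_eq] at h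
  by_cases hr : r < l.length
  · rw [List.getD_eq_getElem _ _ hr] at h
    exact ⟨hr, lt_of_lt_of_le h (List.le_sum_of_mem (List.getElem_mem hr))⟩
  · rw [List.getD_eq_default _ _ (by omega)] at h
    omega

theorem kostka_inj {l : List ℕ} {n : ℕ} {T : ℕ → ℕ → ℕ}
    (hc : HasContent l T (List.replicate n 1)) {r c r' c' : ℕ} (h1 : c < l.getD r 0)
    (h2 : c' < l.getD r' 0) (h : T r c = T r' c') : (r, c) = (r', c') := by
  have h0 := hc (T r c)
  have hf : Finite {x : ℕ × ℕ // x.2 < l.getD x.1 0 ∧ T x.1 x.2 = T r c} :=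
    ((kostka_cells_finite l).subset (fun x hx => hx.1) :
      {x : ℕ × ℕ | x.2 < l.getD x.1 0 ∧ T x.1 x.2 = T r c}.Finite)
  have h3 : (List.replicate n 1).getD (T r c) 0 ≤ 1 := by
    simp only [List.getD_eq_getElem?_getD, List.getElem?_replicate]
    split_ifs <;> simp
  rw [← h0, Finite.card_le_one_iff_subsingleton] at h3
  have := h3.elim ⟨(r, c), h1, rfl⟩ ⟨(r', c'), h2, h.symm⟩
  exact congrArg Subtype.val this

theorem kostka_transpose_aux {l l' : List ℕ} {n : ℕ} {T : ℕ → ℕ → ℕ}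
    (hl : ∀ r c, c < l.getD r 0 ↔ r < l'.getD c 0)
    (h : IsSSYT l T ∧ HasContent l T (List.replicate n 1)) :
    IsSSYT l' (fun r c => T c r) ∧ HasContent l' (fun r c => T c r) (List.replicate n 1) := by
  obtain ⟨h, hc⟩ := h
  refine ⟨⟨?_, ?_, ?_⟩, ?_⟩
  · intro r c1 c2 h1 h2
    rw [← hl] at h2
    obtain h3 | rfl := lt_or_eq_of_le h1
    · exact (h.2.1 c1 c2 r h3 h2).le
    · exact le_rfl
  · intro r1 r2 c h1 h2
    rw [← hl] at h2
    refine lt_of_le_of_ne (h.1 c r1 r2 h1.le h2) (fun h3 => ?_)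
    have := kostka_inj hc (h1.trans h2) h2 h3
    simp only [Prod.mk.injEq, true_and] at this
    omega
  · intro r c h1
    apply h.2.2
    have := hl c r
    omega
  · intro v
    rw [← hc v]
    refine Nat.card_congr ((Equiv.prodComm ℕ ℕ).subtypeEquiv ?_)
    rintro ⟨r, c⟩
    exact and_congr (hl c r).symm Iff.rfl

theorem kostka_transpose {l l' : List ℕ} (n : ℕ)
    (hl : ∀ r c, c < l.getD r 0 ↔ r < l'.getD c 0) :
    kostka l (List.replicate n 1) = kostka l' (List.replicate n 1) :=
  Nat.card_congr
    { toFun := fun T => ⟨fun r c => T.1 c r, kostka_transpose_aux hl T.2⟩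
      invFun := fun T => ⟨fun r c => T.1 c r, kostka_transpose_aux (fun r c => (hl c r).symm) T.2⟩
      left_inv := fun _ => rfl
      right_inv := fun _ => rfl }

theorem kostka_two_row (d q s : ℕ) :
    kostka (List.replicate (d + q) 2 ++ List.replicate s 1)
      (List.replicate d 2 ++ List.replicate (q + s + q) 1) = fSYT [q + s, q] := by
  rw [kostka_strip, fSYT, show [q + s, q].sum = q + s + q by simp]
  apply kostka_transpose
  intro r c
  rw [kostka_getD]
  rcases c with _ | _ | c
  · simp only [List.getD_cons_zero]
    split_ifs <;> omega
  · simp only [List.getD_cons_succ, List.getD_cons_zero, zero_add]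
    split_ifs <;> omega
  · simp only [List.getD_cons_succ, List.getD_nil]
    split_ifs <;> omega

theorem kostka_vanish (d q s : ℕ) (ν : List ℕ) :
    kostka (List.replicate d 2 ++ List.replicate s 1)
      (List.replicate (d + (q + 1)) 2 ++ ν) = 0 := by
  have := kostka_strip d 0 s (List.replicate (q + 1) 2 ++ ν)
  rw [← List.append_assoc, List.replicate_append_replicate, add_zero] at this
  rw [this, List.replicate_succ, List.cons_append]
  apply kostka_one_col
  intro r
  rw [kostka_getD]
  split_ifs <;> omega

/-- Kostka numbers of two-column shapes. For `n = 2k` and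
`λ^j = (2^{k-j}, 1^{2j})`, `K_{λ^i,λ^j} = f^{(j+i, j-i)}` when `i ≤ j` and `0`
when `i > j`; for `n = 2k+1` and `λ^j = (2^{k-j}, 1^{2j+1})`,
`K_{λ^i,λ^j} = f^{(j+i+1, j-i)}` when `i ≤ j` and `0` when `i > j`. -/
theorem kostka_two_column (k : ℕ) :
    (∀ i j, i ≤ k → j ≤ k →
      (i ≤ j → kostka (List.replicate (k - i) 2 ++ List.replicate (2 * i) 1)
          (List.replicate (k - j) 2 ++ List.replicate (2 * j) 1) = fSYT [j + i, j - i]) ∧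
      (j < i → kostka (List.replicate (k - i) 2 ++ List.replicate (2 * i) 1)
          (List.replicate (k - j) 2 ++ List.replicate (2 * j) 1) = 0)) ∧
    (∀ i j, i ≤ k → j ≤ k →
      (i ≤ j → kostka (List.replicate (k - i) 2 ++ List.replicate (2 * i + 1) 1)
          (List.replicate (k - j) 2 ++ List.replicate (2 * j + 1) 1) = fSYT [j + i + 1, j - i]) ∧
      (j < i → kostka (List.replicate (k - i) 2 ++ List.replicate (2 * i + 1) 1)
          (List.replicate (k - j) 2 ++ List.replicate (2 * j + 1) 1) = 0)) := by
  refine ⟨fun i j hi hj => ⟨fun h => ?_, fun h => ?_⟩, fun i j hi hj => ⟨fun h => ?_, fun h => ?_⟩⟩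
  · have := kostka_two_row (k - j) (j - i) (2 * i)
    rwa [show k - j + (j - i) = k - i by omega, show j - i + 2 * i + (j - i) = 2 * j by omega,
      show j - i + 2 * i = j + i by omega] at this
  · have := kostka_vanish (k - i) (i - j - 1) (2 * i) (List.replicate (2 * j) 1)
    rwa [show k - i + (i - j - 1 + 1) = k - j by omega] at this
  · have := kostka_two_row (k - j) (j - i) (2 * i + 1)
    rwa [show k - j + (j - i) = k - i by omega,
      show j - i + (2 * i + 1) + (j - i) = 2 * j + 1 by omega,
      show j - i + (2 * i + 1) = j + i + 1 by omega] at this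
  · have := kostka_vanish (k - i) (i - j - 1) (2 * i + 1) (List.replicate (2 * j + 1) 1)
    rwa [show k - i + (i - j - 1 + 1) = k - j by omega] at this
end

section
/- Let n = 2k with λ^j = (2^{k−j}, 1^{2j}) for 0 ≤ j ≤ k (respectively n = 2k+1 with λ^j = (2^{k−j}, 1^{2j+1})). For 0 ≤ i < j ≤ k: (1) λ^j ≤_I λ^i in the immersion poset if and only if f^{λ^i} ≥ f^{λ^j}; (2) λ^i and λ^j are incomparable in the immersion poset if and only if f^{λ^j} > f^{λ^i}. -/
open Finset MvPolynomial

/-- The two-column partition `(2^{k-m}, 1^{2m})` of `2k`. -/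
def twoColE (k m : ℕ) : List ℕ := List.replicate (k - m) 2 ++ List.replicate (2 * m) 1

/-- The two-column partition `(2^{k-m}, 1^{2m+1})` of `2k+1`. -/
def twoColO (k m : ℕ) : List ℕ := List.replicate (k - m) 2 ++ List.replicate (2 * m + 1) 1

/-- Shape with `q` rows of length 2, `d` rows of length 1. -/
def sh (q d : ℕ) : List ℕ := List.replicate q 2 ++ List.replicate d 1

theorem sh_getD (q d i : ℕ) :
    (sh q d).getD i 0 = if i < q then 2 else if i < q + d then 1 else 0 := by
  unfold sh
  rw [List.getD_eq_getElem?_getD, List.getElem?_append]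
  simp only [List.length_replicate, List.getElem?_replicate]
  split_ifs <;> first | rfl | omega

/-- number of indices below `p` where `a` takes value `k` -/
def cnt (a : ℕ → ℕ) (p k : ℕ) : ℕ := ∑ i ∈ range p, if a i = k then 1 else 0

theorem cnt_succ (a : ℕ → ℕ) (p k : ℕ) :
    cnt a (p + 1) k = cnt a p k + if a p = k then 1 else 0 := by
  unfold cnt
  rw [sum_range_succ]

theorem cnt_congr (a b : ℕ → ℕ) (p k : ℕ) (h : ∀ i < p, a i = b i) : cnt a p k = cnt b p k := by
  unfold cnt
  apply sum_congr rfl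
  intro i hi
  rw [h i (mem_range.1 hi)]

theorem cnt_update (a : ℕ → ℕ) (p k x : ℕ) : cnt (Function.update a p x) p k = cnt a p k := by
  apply cnt_congr
  intro i hi
  rw [Function.update_of_ne (by omega)]

theorem cnt_pos (a : ℕ → ℕ) (p i : ℕ) (h : i < p) : 0 < cnt a p (a i) := by
  unfold cnt
  apply Finset.sum_pos' (by simp)
  exact ⟨i, by simpa using h, by simp⟩

theorem cnt_zero (a : ℕ → ℕ) (p k : ℕ) (h : ∀ i < p, a i ≠ k) : cnt a p k = 0 := by
  unfold cnt
  apply Finset.sum_eq_zero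
  intro i hi
  simp [h i (mem_range.1 hi)]

theorem cnt_le_one (a : ℕ → ℕ) (p k : ℕ) (h : ∀ i j, i < j → j < p → a i < a j) :
    cnt a p k ≤ 1 := by
  unfold cnt
  rw [← Finset.card_filter, Finset.card_le_one]
  intro x hx y hy
  simp only [mem_filter, mem_range] at hx hy
  rcases lt_trichotomy x y with hh | hh | hh
  · have := h x y hh hy.1
    omega
  · exact hh
  · have := h y x hh hx.1
    omega

/-- two-column tableaux as pairs of columns -/
def S (p q : ℕ) (ν : ℕ → ℕ) : Set ((ℕ → ℕ) × (ℕ → ℕ)) :=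
  {t | (∀ i < q, t.1 i ≤ t.2 i) ∧ (∀ i j, i < j → j < p → t.1 i < t.1 j) ∧
    (∀ i j, i < j → j < q → t.2 i < t.2 j) ∧ (∀ i, p ≤ i → t.1 i = 0) ∧
    (∀ i, q ≤ i → t.2 i = 0) ∧ ∀ k, cnt t.1 p k + cnt t.2 q k = ν k}

theorem kostka_sh (q d : ℕ) (ν : List ℕ) :
    kostka (sh q d) ν = (S (q + d) q (fun k => ν.getD k 0)).ncard := by
  unfold kostka
  rw [← Nat.card_coe_set_eq]
  have hcont : ∀ (T : ℕ → ℕ → ℕ) (k : ℕ),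
      Nat.card {c : ℕ × ℕ // c.2 < (sh q d).getD c.1 0 ∧ T c.1 c.2 = k}
        = cnt (fun i => T i 0) (q + d) k + cnt (fun i => T i 1) q k := by
    intro T k
    have : ∀ c : ℕ × ℕ, (c.2 < (sh q d).getD c.1 0 ∧ T c.1 c.2 = k) ↔
        c ∈ (((range (q + d)).filter (fun i => T i 0 = k)).image (fun i => (i, 0)))
          ∪ (((range q).filter (fun i => T i 1 = k)).image (fun i => (i, 1))) := by
      rintro ⟨x, y⟩
      rw [sh_getD]
      simp only [mem_union, mem_image, mem_filter, mem_range, Prod.mk.injEq]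
      constructor
      · rintro ⟨h1, h2⟩
        have h2' : T x y = k := h2
        have h1' : y < if x < q then 2 else if x < q + d then 1 else 0 := h1
        have : (y = 0 ∧ x < q + d) ∨ (y = 1 ∧ x < q) := by
          split_ifs at h1' <;> omega
        rcases this with ⟨rfl, h⟩ | ⟨rfl, h⟩
        · exact Or.inl ⟨x, ⟨h, h2'⟩, rfl, rfl⟩
        · exact Or.inr ⟨x, ⟨h, h2'⟩, rfl, rfl⟩
      · rintro (⟨a, ⟨h, h'⟩, rfl, rfl⟩ | ⟨a, ⟨h, h'⟩, rfl, rfl⟩)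
        · refine ⟨?_, h'⟩
          show 0 < _
          split_ifs <;> omega
        · refine ⟨?_, h'⟩
          show 1 < _
          split_ifs <;> omega
    rw [Nat.card_congr (Equiv.subtypeEquivRight this)]
    rw [Nat.card_eq_fintype_card, Fintype.card_coe, card_union_of_disjoint]
    · rw [card_image_of_injective _ (fun x y h => (Prod.mk.inj h).1),
        card_image_of_injective _ (fun x y h => (Prod.mk.inj h).1), Finset.card_filter,
        Finset.card_filter]
      rfl
    · rw [Finset.disjoint_left]
      rintro ⟨x, y⟩ h1 h2
      simp only [mem_image, mem_filter, mem_range, Prod.mk.injEq] at h1 h2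
      obtain ⟨_, _, _, h1⟩ := h1
      obtain ⟨_, _, _, h2⟩ := h2
      omega
  apply Nat.card_congr
  refine ⟨fun T => ⟨(fun i => T.1 i 0, fun i => T.1 i 1), ?_⟩,
    fun t => ⟨fun i j => if j = 0 then t.1.1 i else if j = 1 then t.1.2 i else 0, ?_⟩, ?_, ?_⟩
  · obtain ⟨T, ⟨h1, h2, h3⟩, h4⟩ := T
    simp only [sh_getD] at h1 h2 h3
    refine ⟨?_, ?_, ?_, ?_, ?_, ?_⟩
    · intro i hi
      exact h1 i 0 1 (by omega) (by simp [hi])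
    · intro i j hij hj
      exact h2 i j 0 hij (by split_ifs <;> omega)
    · intro i j hij hj
      exact h2 i j 1 hij (by split_ifs; omega)
    · intro i hi
      exact h3 i 0 (by split_ifs <;> omega)
    · intro i hi
      exact h3 i 1 (by split_ifs <;> omega)
    · intro k
      rw [← hcont T k]
      exact h4 k
  · obtain ⟨⟨a, b⟩, h1, h2, h3, h4, h5, h6⟩ := t
    simp only at h1 h2 h3 h4 h5 h6
    refine ⟨⟨?_, ?_, ?_⟩, ?_⟩
    · intro i j1 j2 h h'
      rw [sh_getD] at h'
      have : j2 < 2 := by split_ifs at h' <;> omega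
      have hc : j1 = j2 ∨ (j1 = 0 ∧ j2 = 1) := by omega
      rcases hc with rfl | ⟨rfl, rfl⟩
      · exact le_rfl
      · simpa using h1 i (by split_ifs at h' <;> omega)
    · intro i1 i2 j h h'
      rw [sh_getD] at h'
      have : (j = 0 ∧ i2 < q + d) ∨ (j = 1 ∧ i2 < q) := by split_ifs at h' <;> omega
      rcases this with ⟨rfl, hc⟩ | ⟨rfl, hc⟩
      · simpa using h2 i1 i2 h hc
      · simpa using h3 i1 i2 h hc
    · intro i j h
      rw [sh_getD] at h
      show (if j = 0 then a i else if j = 1 then b i else 0) = 0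
      split_ifs with g1 g2
      · exact h4 i (by split_ifs at h <;> omega)
      · exact h5 i (by split_ifs at h <;> omega)
      · rfl
    · intro k
      refine (hcont (fun i j => if j = 0 then a i else if j = 1 then b i else 0) k).trans ?_
      simpa using h6 k
  · rintro ⟨T, ⟨h1, h2, h3⟩, h4⟩
    apply Subtype.ext
    funext i j
    show (if j = 0 then T i 0 else if j = 1 then T i 1 else 0) = T i j
    split_ifs with g1 g2
    · rw [g1]
    · rw [g2]
    · rw [h3]
      rw [sh_getD]
      split_ifs <;> omega
  · rintro ⟨⟨a, b⟩, h⟩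
    apply Subtype.ext
    simp

theorem S_le {p q : ℕ} {ν : ℕ → ℕ} {L : ℕ} (hL : ∀ k, L < k → ν k = 0)
    {t : (ℕ → ℕ) × (ℕ → ℕ)} (ht : t ∈ S p q ν) :
    (∀ i < p, t.1 i ≤ L) ∧ (∀ i < q, t.2 i ≤ L) := by
  obtain ⟨h1, h2, h3, h4, h5, h6⟩ := ht
  constructor
  · intro i hi
    by_contra! hc
    have := h6 (t.1 i)
    have h := cnt_pos t.1 p i hi
    rw [hL _ hc] at this
    omega
  · intro i hi
    by_contra! hc
    have := h6 (t.2 i)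
    have h := cnt_pos t.2 q i hi
    rw [hL _ hc] at this
    omega

def dl (L k : ℕ) : ℕ := if L = k then 1 else 0

theorem addA {p q L : ℕ} {ν : ℕ → ℕ} {t : (ℕ → ℕ) × (ℕ → ℕ)} (hqp : q ≤ p)
    (ht : t ∈ S p q ν) (hlt : ∀ i < p, t.1 i < L) :
    (Function.update t.1 p L, t.2) ∈ S (p + 1) q (fun k => ν k + dl L k) := by
  obtain ⟨h1, h2, h3, h4, h5, h6⟩ := ht
  refine ⟨?_, ?_, h3, ?_, h5, ?_⟩
  · intro i hi
    simp only
    rw [Function.update_of_ne (by omega)]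
    exact h1 i hi
  · intro i j hij hj
    simp only
    rw [Function.update_of_ne (by omega)]
    by_cases hjp : j = p
    · subst hjp
      simpa using hlt i hij
    · rw [Function.update_of_ne hjp]
      exact h2 i j hij (by omega)
  · intro i hi
    simp only
    rw [Function.update_of_ne (by omega)]
    exact h4 i (by omega)
  · intro k
    simp only [cnt_succ, cnt_update, Function.update_self, dl, ← h6 k]
    omega

theorem addB {p q L : ℕ} {ν : ℕ → ℕ} {t : (ℕ → ℕ) × (ℕ → ℕ)}
    (ht : t ∈ S p q ν) (hlt : ∀ i < q, t.2 i < L) (hle : t.1 q ≤ L) :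
    (t.1, Function.update t.2 q L) ∈ S p (q + 1) (fun k => ν k + dl L k) := by
  obtain ⟨h1, h2, h3, h4, h5, h6⟩ := ht
  refine ⟨?_, h2, ?_, h4, ?_, ?_⟩
  · intro i hi
    simp only
    by_cases hiq : i = q
    · subst hiq
      simpa using hle
    · rw [Function.update_of_ne hiq]
      exact h1 i (by omega)
  · intro i j hij hj
    simp only
    rw [Function.update_of_ne (by omega)]
    by_cases hjp : j = q
    · subst hjp
      simpa using hlt i hij
    · rw [Function.update_of_ne hjp]
      exact h3 i j hij (by omega)
  · intro i hi
    simp only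
    rw [Function.update_of_ne (by omega)]
    exact h5 i (by omega)
  · intro k
    simp only [cnt_succ, cnt_update, Function.update_self, dl, ← h6 k]
    omega

theorem remA {p q L : ℕ} {ν ν' : ℕ → ℕ} {t : (ℕ → ℕ) × (ℕ → ℕ)} (hqp : q ≤ p)
    (ht : t ∈ S (p + 1) q ν) (hL : t.1 p = L) (hν : ∀ k, ν k = ν' k + dl L k) :
    (Function.update t.1 p 0, t.2) ∈ S p q ν' := by
  obtain ⟨h1, h2, h3, h4, h5, h6⟩ := ht
  refine ⟨?_, ?_, h3, ?_, h5, ?_⟩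
  · intro i hi
    simp only
    rw [Function.update_of_ne (by omega)]
    exact h1 i hi
  · intro i j hij hj
    simp only
    rw [Function.update_of_ne (by omega), Function.update_of_ne (by omega)]
    exact h2 i j hij (by omega)
  · intro i hi
    simp only
    by_cases hip : i = p
    · subst hip
      simp
    · rw [Function.update_of_ne hip]
      exact h4 i (by omega)
  · intro k
    have := h6 k
    rw [hν, cnt_succ, hL] at this
    simp only [cnt_update]
    unfold dl at this
    omega

theorem remB {p q L : ℕ} {ν ν' : ℕ → ℕ} {t : (ℕ → ℕ) × (ℕ → ℕ)}
    (ht : t ∈ S p (q + 1) ν) (hL : t.2 q = L) (hν : ∀ k, ν k = ν' k + dl L k) :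
    (t.1, Function.update t.2 q 0) ∈ S p q ν' := by
  obtain ⟨h1, h2, h3, h4, h5, h6⟩ := ht
  refine ⟨?_, h2, ?_, h4, ?_, ?_⟩
  · intro i hi
    simp only
    rw [Function.update_of_ne (by omega)]
    exact h1 i (by omega)
  · intro i j hij hj
    simp only
    rw [Function.update_of_ne (by omega), Function.update_of_ne (by omega)]
    exact h3 i j hij (by omega)
  · intro i hi
    simp only
    by_cases hip : i = q
    · subst hip
      simp
    · rw [Function.update_of_ne hip]
      exact h5 i (by omega)
  · intro k
    have := h6 k
    rw [hν, cnt_succ, hL] at this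
    simp only [cnt_update]
    unfold dl at this
    omega

theorem S_lt {p q : ℕ} {ν : ℕ → ℕ} {L : ℕ} (hL : ∀ k, L ≤ k → ν k = 0)
    {t : (ℕ → ℕ) × (ℕ → ℕ)} (ht : t ∈ S p q ν) :
    (∀ i < p, t.1 i < L) ∧ (∀ i < q, t.2 i < L) := by
  obtain ⟨h1, h2, h3, h4, h5, h6⟩ := ht
  constructor
  · intro i hi
    by_contra! hc
    have := h6 (t.1 i)
    have h := cnt_pos t.1 p i hi
    rw [hL _ hc] at this
    omega
  · intro i hi
    by_contra! hc
    have := h6 (t.2 i)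
    have h := cnt_pos t.2 q i hi
    rw [hL _ hc] at this
    omega

/-- if letter `L` (the largest) occurs in column `a`, it occurs at the bottom -/
theorem top_of_cnt {a : ℕ → ℕ} {p L : ℕ} (h : ∀ i j, i < j → j < p + 1 → a i < a j)
    (hle : ∀ i < p + 1, a i ≤ L) (hc : a p ≠ L) : cnt a (p + 1) L = 0 := by
  apply cnt_zero
  intro i hi he
  by_cases hip : i = p
  · subst hip
    exact hc he
  · have := h i p (by omega) (by omega)
    have := hle p (by omega)
    omega

theorem fst_inj {p q L : ℕ} {ν : ℕ → ℕ} :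
    Set.InjOn (fun t : (ℕ → ℕ) × (ℕ → ℕ) => (Function.update t.1 p L, t.2)) (S p q ν) := by
  rintro ⟨a, b⟩ ht ⟨a', b'⟩ ht' h
  simp only [Prod.mk.injEq] at h
  obtain ⟨h1, rfl⟩ := h
  have : a = a' := by
    funext i
    by_cases hi : i = p
    · exact (ht.2.2.2.1 i (by omega)).trans (ht'.2.2.2.1 i (by omega)).symm
    · have := congrFun h1 i
      rwa [Function.update_of_ne hi, Function.update_of_ne hi] at this
  rw [this]

theorem snd_inj {p q L : ℕ} {ν : ℕ → ℕ} :
    Set.InjOn (fun t : (ℕ → ℕ) × (ℕ → ℕ) => (t.1, Function.update t.2 q L)) (S p q ν) := by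
  rintro ⟨a, b⟩ ht ⟨a', b'⟩ ht' h
  simp only [Prod.mk.injEq] at h
  obtain ⟨rfl, h1⟩ := h
  have : b = b' := by
    funext i
    by_cases hi : i = q
    · exact (ht.2.2.2.2.1 i (by omega)).trans (ht'.2.2.2.2.1 i (by omega)).symm
    · have := congrFun h1 i
      rwa [Function.update_of_ne hi, Function.update_of_ne hi] at this
  rw [this]

/-- tableaux whose largest letter `L` (of multiplicity one) is in the first column -/
theorem partA {p q L : ℕ} {ν' : ℕ → ℕ} (hqp : q ≤ p) (hL : ∀ k, L ≤ k → ν' k = 0) :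
    {t ∈ S (p + 1) q (fun k => ν' k + dl L k) | t.1 p = L}.encard = (S p q ν').encard := by
  rw [← (fst_inj (p := p) (q := q) (L := L) (ν := ν')).encard_image]
  congr 1
  ext ⟨a, b⟩
  constructor
  · rintro ⟨h, h'⟩
    refine ⟨_, remA hqp h h' (fun _ => rfl), ?_⟩
    simp only at h'
    simp [← h']
  · rintro ⟨t, ht, h⟩
    rw [← h]
    exact ⟨addA hqp ht (S_lt hL ht).1, by simp⟩

theorem partB {p q L : ℕ} {ν' : ℕ → ℕ} (hL : ∀ k, L ≤ k → ν' k = 0) :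
    {t ∈ S p (q + 1) (fun k => ν' k + dl L k) | t.2 q = L}.encard = (S p q ν').encard := by
  rw [← (snd_inj (p := p) (q := q) (L := L) (ν := ν')).encard_image]
  congr 1
  ext ⟨a, b⟩
  constructor
  · rintro ⟨h, h'⟩
    refine ⟨_, remB h h' (fun _ => rfl), ?_⟩
    simp only at h'
    simp [← h']
  · rintro ⟨t, ht, h⟩
    rw [← h]
    refine ⟨addB ht (S_lt hL ht).2 ?_, by simp⟩
    by_cases hq : q < p
    · exact ((S_lt hL ht).1 q hq).le
    · rw [ht.2.2.2.1 q (by omega)]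
      omega

theorem dl_le {L k : ℕ} {ν' : ℕ → ℕ} (hL : ∀ k, L ≤ k → ν' k = 0) (h : L < k) :
    ν' k + dl L k = 0 := by
  rw [hL k h.le, dl, if_neg (by omega)]

theorem stepAB {p q L : ℕ} {ν' : ℕ → ℕ} (hqp : q + 1 ≤ p) (hL : ∀ k, L ≤ k → ν' k = 0) :
    (S (p + 1) (q + 1) (fun k => ν' k + dl L k)).encard
      = (S p (q + 1) ν').encard + (S (p + 1) q ν').encard := by
  rw [← partA hqp hL, ← partB hL, ← Set.encard_union_eq]
  · congr 1
    ext t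
    constructor
    · intro ht
      by_cases h1 : t.1 p = L
      · exact Or.inl ⟨ht, h1⟩
      by_cases h2 : t.2 q = L
      · exact Or.inr ⟨ht, h2⟩
      exfalso
      have hle := S_le (fun k hk => dl_le hL hk) ht
      have e1 := top_of_cnt ht.2.1 hle.1 h1
      have e2 := top_of_cnt ht.2.2.1 hle.2 h2
      have := ht.2.2.2.2.2 L
      simp only [dl, if_true] at this
      omega
    · rintro (h | h)
      · exact h.1
      · exact h.1
  · rw [Set.disjoint_left]
    rintro t ⟨ht, h1⟩ ⟨_, h2⟩
    have := ht.2.2.2.2.2 L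
    simp only [dl, if_true, hL L le_rfl] at this
    have e1 := cnt_pos t.1 (p + 1) p (by omega)
    have e2 := cnt_pos t.2 (q + 1) q (by omega)
    rw [h1] at e1
    rw [h2] at e2
    omega

theorem stepA {p L : ℕ} {ν' : ℕ → ℕ} (hL : ∀ k, L ≤ k → ν' k = 0) :
    (S (p + 1) 0 (fun k => ν' k + dl L k)).encard = (S p 0 ν').encard := by
  rw [← partA (Nat.zero_le p) hL]
  congr 1
  ext t
  refine ⟨fun ht => ⟨ht, ?_⟩, fun h => h.1⟩
  by_contra h1
  have hle := S_le (fun k hk => dl_le hL hk) ht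
  have e1 := top_of_cnt ht.2.1 hle.1 h1
  have := ht.2.2.2.2.2 L
  have e2 : cnt t.2 0 L = 0 := by simp [cnt]
  simp only [dl, if_true] at this
  omega

theorem stepB {q L : ℕ} {ν' : ℕ → ℕ} (hL : ∀ k, L ≤ k → ν' k = 0) :
    (S (q + 1) (q + 1) (fun k => ν' k + dl L k)).encard = (S (q + 1) q ν').encard := by
  rw [← partB hL]
  congr 1
  ext t
  refine ⟨fun ht => ⟨ht, ?_⟩, fun h => h.1⟩
  by_contra h2
  have hle := S_le (fun k hk => dl_le hL hk) ht
  have e2 := top_of_cnt ht.2.2.1 hle.2 h2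
  have h1 : t.1 q ≠ L := by
    intro h
    have := ht.1 q (by omega)
    have := hle.2 q (by omega)
    omega
  have e1 := top_of_cnt ht.2.1 hle.1 h1
  have := ht.2.2.2.2.2 L
  simp only [dl, if_true] at this
  omega

theorem S_two_empty {p L : ℕ} {ν : ℕ → ℕ} (hL : 2 ≤ ν L) : S p 0 ν = ∅ := by
  ext t
  simp only [Set.mem_empty_iff_false, iff_false]
  intro ht
  have h1 := cnt_le_one t.1 p L ht.2.1
  have h2 : cnt t.2 0 L = 0 := by simp [cnt]
  have := ht.2.2.2.2.2 L
  omega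

theorem S_three_empty {p q L : ℕ} {ν : ℕ → ℕ} (hL : 3 ≤ ν L) : S p q ν = ∅ := by
  ext t
  simp only [Set.mem_empty_iff_false, iff_false]
  intro ht
  have h1 := cnt_le_one t.1 p L ht.2.1
  have h2 := cnt_le_one t.2 q L ht.2.2.1
  have := ht.2.2.2.2.2 L
  omega

theorem step2 {p q L : ℕ} {ν' : ℕ → ℕ} (hqp : q ≤ p) (hL : ∀ k, L ≤ k → ν' k = 0) :
    (S (p + 1) (q + 1) (fun k => ν' k + dl L k + dl L k)).encard = (S p q ν').encard := by
  rw [← partA hqp hL,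
    ← ((snd_inj (p := p + 1) (q := q) (L := L) (ν := fun k => ν' k + dl L k)).mono
      (Set.sep_subset _ _)).encard_image]
  congr 1
  ext ⟨a, b⟩
  constructor
  · intro ht
    have hle := S_le (L := L) (fun k hk => by
      have := dl_le hL hk
      simp only [dl] at this ⊢
      omega) ht
    have hc := ht.2.2.2.2.2 L
    have c1 := cnt_le_one _ (p + 1) L ht.2.1
    have c2 := cnt_le_one _ (q + 1) L ht.2.2.1
    simp only [dl, if_true] at hc
    have h1 : a p = L := by
      by_contra h
      have := top_of_cnt ht.2.1 hle.1 h
      simp only at c1 c2 this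
      omega
    have h2 : b q = L := by
      by_contra h
      have := top_of_cnt ht.2.2.1 hle.2 h
      simp only at c1 c2 this
      omega
    refine ⟨_, ⟨remB ht h2 (fun _ => rfl), h1⟩, ?_⟩
    simp [← h2]
  · rintro ⟨t, ⟨ht, h1⟩, h⟩
    rw [← h]
    have ht' := remA hqp ht h1 (fun _ => rfl)
    refine addB ht (S_lt hL ht').2 ?_
    by_cases hq : q < p + 1
    · exact (S_le (fun k hk => dl_le hL hk) ht).1 q hq
    · omega

def nu (r m k : ℕ) : ℕ := if k < r then 2 else if k < r + m then 1 else 0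

theorem nu_m (r m : ℕ) : nu r (m + 1) = fun k => nu r m k + dl (r + m) k := by
  funext k
  unfold nu dl
  split_ifs <;> omega

theorem nu_r (r : ℕ) : nu (r + 1) 0 = fun k => nu r 0 k + dl r k + dl r k := by
  funext k
  unfold nu dl
  split_ifs <;> omega

theorem nu_zero (r m : ℕ) : ∀ k, r + m ≤ k → nu r m k = 0 := by
  intro k hk
  unfold nu
  split_ifs <;> omega

/-- The number of SYT of two columns of lengths `q + d`, `q`. -/
def G : ℕ → ℕ → ℕ
  | 0, _ => 1
  | q + 1, 0 => G q 1
  | q + 1, d + 1 => G (q + 1) d + G q (d + 2)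
termination_by q d => (q, d)

theorem G_formula (q d : ℕ) :
    G q d * (q.factorial * (q + d + 1).factorial) = (d + 1) * (2 * q + d).factorial := by
  induction q, d using G.induct with
  | case1 d => simp [G, Nat.factorial_succ]
  | case2 q ih =>
    rw [G]
    have e1 : (q + 1).factorial = (q + 1) * q.factorial := Nat.factorial_succ q
    have e2 : (2 * (q + 1) + 0).factorial = (2 * q + 2) * (2 * q + 1).factorial :=
      Nat.factorial_succ (2 * q + 1)
    rw [e1, e2]
    have e3 : q + 1 + 0 + 1 = q + 1 + 1 := by omega
    rw [e3]
    linear_combination (q + 1) * ih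
  | case3 q d ih1 ih2 =>
    rw [G]
    have e1 : (q + 1).factorial = (q + 1) * q.factorial := Nat.factorial_succ q
    have e2 : (2 * (q + 1) + (d + 1)).factorial = (2 * q + d + 3) * (2 * q + d + 2).factorial := by
      rw [← Nat.factorial_succ]
      congr 1
      ring
    have e3 : q + 1 + (d + 1) + 1 = (q + d + 2) + 1 := by omega
    have e4 : q + 1 + d + 1 = q + d + 2 := by omega
    have e5 : q + (d + 2) + 1 = (q + d + 2) + 1 := by omega
    have e6 : 2 * (q + 1) + d = 2 * q + d + 2 := by omega
    have e7 : 2 * q + (d + 2) = 2 * q + d + 2 := by omega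
    rw [e4, e6, e1] at ih1
    rw [e5, e7] at ih2
    rw [e2, e3, e1]
    rw [Nat.factorial_succ (q + d + 2)] at *
    simp only [Nat.succ_eq_add_one]
    linear_combination (q + d + 3) * ih1 + (q + 1) * ih2

theorem G_step (q d : ℕ) :
    G (q + 1) d * ((q + 1) * (q + d + 2)) = G q d * ((2 * q + d + 2) * (2 * q + d + 1)) := by
  have h1 := G_formula (q + 1) d
  have h2 := G_formula q d
  have e1 : (q + 1).factorial = (q + 1) * q.factorial := Nat.factorial_succ q
  have e2 : (q + 1 + d + 1).factorial = (q + d + 2) * (q + d + 1).factorial := by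
    rw [← Nat.factorial_succ]
    congr 1
    ring
  have e3 : (2 * (q + 1) + d).factorial
      = (2 * q + d + 2) * ((2 * q + d + 1) * (2 * q + d).factorial) := by
    rw [← Nat.factorial_succ, ← Nat.factorial_succ]
    congr 1
    ring
  rw [e1, e2, e3] at h1
  have hpos : 0 < q.factorial * (q + d + 1).factorial := by positivity
  apply Nat.eq_of_mul_eq_mul_right hpos
  linear_combination h1 - (2 * q + d + 2) * (2 * q + d + 1) * h2

theorem G_desc (q d e r : ℕ) (h : G (q + r) (d + 2 * e) ≤ G (q + e + r) d) :
    G q (d + 2 * e) ≤ G (q + e) d := by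
  induction r with
  | zero => exact h
  | succ r ih =>
    apply ih
    have h1 := G_step (q + r) (d + 2 * e)
    have h2 := G_step (q + e + r) d
    have e1 : 2 * (q + r) + (d + 2 * e) = 2 * (q + e + r) + d := by ring
    rw [e1] at h1
    have hN : 0 < (2 * (q + e + r) + d + 2) * (2 * (q + e + r) + d + 1) := by positivity
    apply Nat.le_of_mul_le_mul_right _ hN
    rw [← h1, ← h2]
    apply Nat.mul_le_mul h
    nlinarith [Nat.zero_le (e * e), Nat.zero_le (e * d), Nat.zero_le e]

theorem S_twos (r : ℕ) : ∀ q d, 2 * q + d = 2 * r →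
    (S (q + d) q (nu r 0)).encard = if r ≤ q then ((G (q - r) d : ℕ) : ℕ∞) else 0 := by
  induction r with
  | zero =>
    intro q d h
    obtain rfl : q = 0 := by omega
    obtain rfl : d = 0 := by omega
    have : S (0 + 0) 0 (nu 0 0) = {(fun _ => 0, fun _ => 0)} := by
      ext ⟨a, b⟩
      constructor
      · intro ht
        have h1 : a = fun _ => 0 := funext fun i => ht.2.2.2.1 i (by omega)
        have h2 : b = fun _ => 0 := funext fun i => ht.2.2.2.2.1 i (by omega)
        rw [h1, h2]
        rfl
      · intro ht
        rw [Set.mem_singleton_iff] at ht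
        rw [ht]
        refine ⟨by simp, by simp, by simp, by simp, by simp, ?_⟩
        intro k
        simp [cnt, nu]
    rw [this]
    simp [G]
  | succ r ih =>
    intro q d h
    cases q with
    | zero =>
      rw [S_two_empty (L := r) (by simp [nu])]
      simp
    | succ q =>
      have e : q + 1 + d = (q + d) + 1 := by omega
      rw [e, nu_r, step2 (L := r) (by omega) (nu_zero r 0), ih q d (by omega)]
      simp

theorem S_nu (r m : ℕ) : ∀ q d, 2 * q + d = 2 * r + m →
    (S (q + d) q (nu r m)).encard = if r ≤ q then ((G (q - r) d : ℕ) : ℕ∞) else 0 := by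
  induction m with
  | zero =>
    intro q d h
    exact S_twos r q d h
  | succ m ih =>
    intro q d h
    rw [nu_m]
    cases q with
    | zero =>
      cases d with
      | zero => omega
      | succ d =>
        have := ih 0 d (by omega)
        rw [show 0 + (d + 1) = 0 + d + 1 by omega, stepA (nu_zero r m), this]
        simp [G]
    | succ q =>
      cases d with
      | zero =>
        have := ih q 1 (by omega)
        rw [show q + 1 + 0 = q + 1 by omega, stepB (nu_zero r m), this]
        by_cases hr : r ≤ q
        · rw [if_pos hr, if_pos (by omega), show q + 1 - r = (q - r) + 1 by omega, G]
        · rw [if_neg hr, if_neg (by omega)]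
      | succ d =>
        have h1 := ih (q + 1) d (by omega)
        have h2 := ih q (d + 2) (by omega)
        rw [show q + 1 + (d + 1) = (q + 1 + d) + 1 by omega, stepAB (by omega) (nu_zero r m), h1,
          show q + 1 + d + 1 = q + (d + 2) by omega, h2]
        by_cases hr : r ≤ q
        · rw [if_pos hr, if_pos (by omega), if_pos (by omega),
            show q + 1 - r = (q - r) + 1 by omega, G]
          push_cast
          rfl
        · by_cases hr' : r = q + 1
          · subst hr'
            simp [G]
          · rw [if_neg hr, if_neg (by omega), if_neg (by omega)]
            simp

theorem kostka_val (r m q d : ℕ) (h : 2 * q + d = 2 * r + m) :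
    kostka (sh q d) (sh r m) = if r ≤ q then G (q - r) d else 0 := by
  rw [kostka_sh]
  have : (fun k => (sh r m).getD k 0) = nu r m := by
    funext k
    rw [sh_getD, nu]
  rw [this, Set.ncard_def, S_nu r m q d h]
  split_ifs <;> simp

theorem part_cases (l : List ℕ) (h1 : l.Pairwise (· ≥ ·)) (h2 : ∀ x ∈ l, 0 < x) :
    (∃ k, 3 ≤ l.getD k 0) ∨ ∃ r m, l = sh r m := by
  induction l with
  | nil => exact Or.inr ⟨0, 0, rfl⟩
  | cons x l ih =>
    rw [List.pairwise_cons] at h1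
    rcases ih h1.2 (fun y hy => h2 y (List.mem_cons_of_mem _ hy)) with ⟨k, hk⟩ | ⟨r, m, rfl⟩
    · exact Or.inl ⟨k + 1, by simpa using hk⟩
    · have hx := h2 x (by simp)
      by_cases h3 : 3 ≤ x
      · exact Or.inl ⟨0, by simpa using h3⟩
      · obtain rfl | rfl : x = 1 ∨ x = 2 := by omega
        · have hr : r = 0 := by
            by_contra hr
            have := h1.1 2 (by simp [sh, hr])
            omega
          subst hr
          exact Or.inr ⟨0, m + 1, by simp [sh, List.replicate_succ]⟩
        · exact Or.inr ⟨r + 1, m, by simp [sh, List.replicate_succ]⟩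

theorem sh_sum (q d : ℕ) : (sh q d).sum = 2 * q + d := by
  simp [sh]
  omega

theorem sh_isPart (q d : ℕ) : IsPartitionOf (2 * q + d) (sh q d) := by
  refine ⟨?_, ?_, sh_sum q d⟩
  · unfold sh
    rw [List.pairwise_append]
    refine ⟨by simp [List.pairwise_replicate], by simp [List.pairwise_replicate], ?_⟩
    intro a ha b hb
    rw [List.eq_of_mem_replicate ha, List.eq_of_mem_replicate hb]
    omega
  · intro x hx
    unfold sh at hx
    rw [List.mem_append] at hx
    rcases hx with hx | hx <;> rw [List.eq_of_mem_replicate hx] <;> omega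

theorem fSYT_sh (q d : ℕ) : fSYT (sh q d) = G q d := by
  unfold fSYT
  rw [sh_sum]
  have := kostka_val 0 (2 * q + d) q d (by omega)
  simpa [sh] using this

theorem imm_iff (q d e : ℕ) :
    ImmersionLE (2 * q + d + 2 * e) (sh q (d + 2 * e)) (sh (q + e) d) ↔
      fSYT (sh q (d + 2 * e)) ≤ fSYT (sh (q + e) d) := by
  constructor
  · intro h
    have := h (sh 0 (2 * q + d + 2 * e)) (by simpa using sh_isPart 0 (2 * q + d + 2 * e))
    rw [kostka_val _ _ _ _ (by omega), kostka_val _ _ _ _ (by omega)] at this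
    rw [fSYT_sh, fSYT_sh]
    simpa using this
  · rw [fSYT_sh, fSYT_sh]
    rintro h ν ⟨h1, h2, h3⟩
    rcases part_cases ν h1 h2 with ⟨k, hk⟩ | ⟨r, m, rfl⟩
    · rw [kostka_sh, S_three_empty (L := k) hk]
      simp
    · rw [sh_sum] at h3
      rw [kostka_val _ _ _ _ (by omega), kostka_val _ _ _ _ (by omega)]
      by_cases hr : r ≤ q
      · rw [if_pos hr, if_pos (by omega), show q + e - r = (q - r) + e by omega]
        apply G_desc (q - r) d e r
        rwa [show q - r + r = q by omega, show q - r + e + r = q + e by omega]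
      · rw [if_neg hr]
        omega

theorem imm_not (q d e : ℕ) (he : 0 < e) :
    ¬ ImmersionLE (2 * q + d + 2 * e) (sh (q + e) d) (sh q (d + 2 * e)) := by
  intro h
  have := h (sh (q + e) d) (by
    have := sh_isPart (q + e) d
    rwa [show 2 * (q + e) + d = 2 * q + d + 2 * e by ring] at this)
  rw [kostka_val _ _ _ _ (by omega), kostka_val _ _ _ _ (by omega)] at this
  rw [if_pos le_rfl, if_neg (by omega)] at this
  simp [G] at this

theorem both (q d e : ℕ) (he : 0 < e) :
    (ImmersionLE (2 * q + d + 2 * e) (sh q (d + 2 * e)) (sh (q + e) d) ↔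
      fSYT (sh q (d + 2 * e)) ≤ fSYT (sh (q + e) d)) ∧
    ((¬ ImmersionLE (2 * q + d + 2 * e) (sh (q + e) d) (sh q (d + 2 * e)) ∧
      ¬ ImmersionLE (2 * q + d + 2 * e) (sh q (d + 2 * e)) (sh (q + e) d)) ↔
      fSYT (sh (q + e) d) < fSYT (sh q (d + 2 * e))) := by
  refine ⟨imm_iff q d e, ?_⟩
  rw [imm_iff, not_le]
  exact ⟨fun h => h.2, fun h => ⟨imm_not q d e he, h⟩⟩

/-- For `0 ≤ i < j ≤ k`, in both the even case `n = 2k` and the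
odd case `n = 2k+1`: `λ^j ≤_I λ^i` iff `f^{λ^i} ≥ f^{λ^j}`, and `λ^i, λ^j` are
incomparable in the immersion poset iff `f^{λ^j} > f^{λ^i}`. -/
theorem two_column_immersion_relations (k i j : ℕ) (hij : i < j) (hjk : j ≤ k) :
    ((ImmersionLE (2 * k) (twoColE k j) (twoColE k i) ↔
        fSYT (twoColE k j) ≤ fSYT (twoColE k i)) ∧
      ((¬ ImmersionLE (2 * k) (twoColE k i) (twoColE k j) ∧
          ¬ ImmersionLE (2 * k) (twoColE k j) (twoColE k i)) ↔
        fSYT (twoColE k i) < fSYT (twoColE k j))) ∧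
    ((ImmersionLE (2 * k + 1) (twoColO k j) (twoColO k i) ↔
        fSYT (twoColO k j) ≤ fSYT (twoColO k i)) ∧
      ((¬ ImmersionLE (2 * k + 1) (twoColO k i) (twoColO k j) ∧
          ¬ ImmersionLE (2 * k + 1) (twoColO k j) (twoColO k i)) ↔
        fSYT (twoColO k i) < fSYT (twoColO k j))) := by
  obtain ⟨e, rfl⟩ : ∃ e, j = i + e := ⟨j - i, by omega⟩
  obtain ⟨q, rfl⟩ : ∃ q, k = q + (i + e) := ⟨k - (i + e), by omega⟩
  have h1 := both q (2 * i) e (by omega)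
  have h2 := both q (2 * i + 1) e (by omega)
  have e1 : twoColE (q + (i + e)) (i + e) = sh q (2 * i + 2 * e) := by
    rw [twoColE, sh, show q + (i + e) - (i + e) = q by omega, mul_add]
  have e2 : twoColE (q + (i + e)) i = sh (q + e) (2 * i) := by
    rw [twoColE, sh, show q + (i + e) - i = q + e by omega]
  have e3 : twoColO (q + (i + e)) (i + e) = sh q (2 * i + 1 + 2 * e) := by
    rw [twoColO, sh, show q + (i + e) - (i + e) = q by omega,
      show 2 * (i + e) + 1 = 2 * i + 1 + 2 * e by omega]
  have e4 : twoColO (q + (i + e)) i = sh (q + e) (2 * i + 1) := by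
    rw [twoColO, sh, show q + (i + e) - i = q + e by omega]
  rw [e1, e2, e3, e4, show 2 * (q + (i + e)) + 1 = 2 * q + (2 * i + 1) + 2 * e by omega,
    show 2 * (q + (i + e)) = 2 * q + 2 * i + 2 * e by omega]
  exact ⟨h1, h2⟩
end
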